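/- Let K be a semidualizing R-module and let c_1 and c_2 be two G_K-Gorenstein ideals of R. Assume M_1, M, M_2 are R-modules such that M_1 is linked to M by c_1 and M is linked to M_2 by c_2, and let n denote the common value of grade(c_1) and grade(c_2). Then Ext^i_R(M_1, K) ≅ Ext^i_R(M_2, K) for all i > n. -/

import Mathlib

open CategoryTheory

noncomputable section

universe u

/-- The `i`-th Ext group `Ext^i_R(M,N)`, as a type (with its `R`-module structure). -/
abbrev extM (R : Type u) [CommRing R] (i : ℕ) (M N : Type u) [AddCommGroup M] [Module R M]
    [AddCommGroup N] [Module R N] : Type u :=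
  ((Ext R (ModuleCat.{u} R) i).obj (Opposite.op (ModuleCat.of R M))).obj (ModuleCat.of R N)

/-- The `i`-th Tor group `Tor^R_i(M,N)`, as a type. -/
abbrev torM (R : Type u) [CommRing R] (i : ℕ) (M N : Type u) [AddCommGroup M] [Module R M]
    [AddCommGroup N] [Module R N] : Type u :=
  ((Tor (ModuleCat.{u} R) i).obj (ModuleCat.of R M)).obj (ModuleCat.of R N)

/-- The `i`-th local cohomology `H^i_I(M)`, as a type. -/
abbrev locCoh (R : Type u) [CommRing R] (I : Ideal R) (i : ℕ) (M : Type u) [AddCommGroup M]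
    [Module R M] : Type u :=
  (localCohomology I i).obj (ModuleCat.of R M)

/-- A submodule `N ≤ M` is superfluous if `K ⊔ N = ⊤` implies `K = ⊤`. -/
def Submodule.IsSuperfluous {R M : Type u} [CommRing R] [AddCommGroup M] [Module R M]
    (N : Submodule R M) : Prop :=
  ∀ K : Submodule R M, K ⊔ N = ⊤ → K = ⊤

/-- A minimal projective resolution of `M` by finitely generated projective modules:
each `P i → Ω^i M` is a projective cover (i.e. has superfluous kernel). -/
structure MinRes (R : Type u) [CommRing R] (M : Type u) [AddCommGroup M] [Module R M] where
  P : ℕ → ModuleCat.{u} R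
  projective : ∀ i, Module.Projective R (P i)
  finite : ∀ i, Module.Finite R (P i)
  d : (i : ℕ) → (↥(P (i + 1)) →ₗ[R] ↥(P i))
  ε : ↥(P 0) →ₗ[R] M
  surj : Function.Surjective ε
  exact0 : LinearMap.range (d 0) = LinearMap.ker ε
  exact : ∀ i, LinearMap.range (d (i + 1)) = LinearMap.ker (d i)
  min_eps : (LinearMap.ker ε).IsSuperfluous
  min_d : ∀ i, (LinearMap.ker (d i)).IsSuperfluous

namespace MinRes

variable {R M : Type u} [CommRing R] [AddCommGroup M] [Module R M]

/-- `T k F` is the Auslander-Bridger transpose `𝒯_{k+1} M = Tr Ω^k M`, computed as the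
cokernel of `P_k* → P_{k+1}*`. -/
def T (F : MinRes R M) (k : ℕ) : Type u :=
  (Module.Dual R ↥(F.P (k + 1))) ⧸ LinearMap.range (F.d k).dualMap

instance (F : MinRes R M) (k : ℕ) : AddCommGroup (F.T k) :=
  inferInstanceAs (AddCommGroup ((Module.Dual R ↥(F.P (k + 1))) ⧸
    LinearMap.range (F.d k).dualMap))

instance (F : MinRes R M) (k : ℕ) : Module R (F.T k) :=
  inferInstanceAs (Module R ((Module.Dual R ↥(F.P (k + 1))) ⧸
    LinearMap.range (F.d k).dualMap))

/-- The transpose `Tr M = coker(P₀* → P₁*)` computed from a minimal projective presentation. -/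
abbrev Tr (F : MinRes R M) : Type u := F.T 0

/-- `λM = ΩTr M`, realized as the image of `P₀* → P₁*` for a minimal projective
presentation `P₁ → P₀ → M → 0`. -/
def lambdaMod (F : MinRes R M) : Type u :=
  ↥(LinearMap.range (F.d 0).dualMap)

instance (F : MinRes R M) : AddCommGroup F.lambdaMod :=
  inferInstanceAs (AddCommGroup ↥(LinearMap.range (F.d 0).dualMap))

instance (F : MinRes R M) : Module R F.lambdaMod :=
  inferInstanceAs (Module R ↥(LinearMap.range (F.d 0).dualMap))

end MinRes

/-- `M` is a horizontally linked `R`-module, i.e. `M ≅ λλM`. -/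
def IsHorizontallyLinked (R : Type u) [CommRing R] (M : Type u) [AddCommGroup M]
    [Module R M] : Prop :=
  ∃ (F : MinRes R M) (G : MinRes R F.lambdaMod), Nonempty (G.lambdaMod ≃ₗ[R] M)

/-- `M` and `N` are horizontally linked to each other: `M ≅ λN` and `N ≅ λM`. -/
def MutuallyLinked (A : Type u) [CommRing A] (M N : Type u) [AddCommGroup M] [Module A M]
    [AddCommGroup N] [Module A N] : Prop :=
  ∃ (F : MinRes A M) (G : MinRes A N),
    Nonempty (F.lambdaMod ≃ₗ[A] N) ∧ Nonempty (G.lambdaMod ≃ₗ[A] M)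

/-- `M` is linked to `N` by the ideal `c`: `c` annihilates both modules and they are
horizontally linked to each other as `R ⧸ c`-modules. -/
def LinkedBy (R : Type u) [CommRing R] (c : Ideal R) (M N : Type u) [AddCommGroup M]
    [Module R M] [AddCommGroup N] [Module R N] : Prop :=
  ∃ (hM : Module.IsTorsionBySet R M c) (hN : Module.IsTorsionBySet R N c),
    letI := hM.module
    letI := hN.module
    MutuallyLinked (R ⧸ c) M N

/-- A stable module: no nonzero projective direct summand. -/
def IsStableModule (R : Type u) [CommRing R] (M : Type u) [AddCommGroup M] [Module R M] : Prop :=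
  ∀ N : Submodule R M, Module.Projective R ↥N → (∃ N' : Submodule R M, IsCompl N N') → N = ⊥

/-- `M` has G-dimension zero: `M` is finitely generated and reflexive,
and `Ext^i(M,R) = 0 = Ext^i(M*,R)` for all `i > 0`. -/
def IsGDimZero (R : Type u) [CommRing R] (M : Type u) [AddCommGroup M] [Module R M] : Prop :=
  Module.Finite R M ∧ Function.Bijective (Module.Dual.eval R M) ∧
    (∀ i : ℕ, 0 < i → Subsingleton (extM R i M R)) ∧
    (∀ i : ℕ, 0 < i → Subsingleton (extM R i (Module.Dual R M) R))

/-- `M` admits a resolution of length `≤ n` by modules of G-dimension zero. -/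
def GDimLE (R : Type u) [CommRing R] : ℕ → ModuleCat.{u} R → Prop
  | 0, M => IsGDimZero R ↥M
  | n + 1, M =>
    ∃ (G : ModuleCat.{u} R) (f : ↥G →ₗ[R] ↥M), IsGDimZero R ↥G ∧ Function.Surjective f ∧
      GDimLE R n (ModuleCat.of R ↥(LinearMap.ker f))

/-- The G-dimension of `M`: the minimal length of a resolution of `M` by modules of
G-dimension zero (`∞` if there is none). -/
def GDim (R : Type u) [CommRing R] (M : Type u) [AddCommGroup M] [Module R M] : ℕ∞ :=
  sInf {n : ℕ∞ | ∃ k : ℕ, n = k ∧ GDimLE R k (ModuleCat.of R M)}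

/-- The reduced grade of `M`: `rgr M = inf{ i > 0 | Ext^i(M,R) ≠ 0 }`. -/
def rgr (R : Type u) [CommRing R] (M : Type u) [AddCommGroup M] [Module R M] : ℕ∞ :=
  sInf {n : ℕ∞ | ∃ k : ℕ, n = k ∧ 0 < k ∧ ¬ Subsingleton (extM R k M R)}

/-- The grade of `M`: `gr M = inf{ i ≥ 0 | Ext^i(M,R) ≠ 0 }`. -/
def egrade (R : Type u) [CommRing R] (M : Type u) [AddCommGroup M] [Module R M] : ℕ∞ :=
  sInf {n : ℕ∞ | ∃ k : ℕ, n = k ∧ ¬ Subsingleton (extM R k M R)}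

/-- `depth_I(M) = inf{ i | Ext^i(R/I, M) ≠ 0 }`; for `I` the maximal ideal of a
local ring this is the depth of `M`. -/
def edepth (R : Type u) [CommRing R] (I : Ideal R) (M : Type u) [AddCommGroup M]
    [Module R M] : ℕ∞ :=
  sInf {n : ℕ∞ | ∃ k : ℕ, n = k ∧ ¬ Subsingleton (extM R k (R ⧸ I) M)}

/-- The depth of the local ring `R`. -/
def rdepth (R : Type u) [CommRing R] [IsLocalRing R] : ℕ∞ :=
  edepth R (IsLocalRing.maximalIdeal R) R

/-- `depth_{R_p}(M_p)`. -/
def locDepth (R : Type u) [CommRing R] (p : Ideal R) [p.IsPrime] (M : Type u) [AddCommGroup M]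
    [Module R M] : ℕ∞ :=
  edepth (Localization.AtPrime p) (IsLocalRing.maximalIdeal (Localization.AtPrime p))
    (LocalizedModule p.primeCompl M)

/-- `depth R_p`. -/
def locRingDepth (R : Type u) [CommRing R] (p : Ideal R) [p.IsPrime] : ℕ∞ :=
  rdepth (Localization.AtPrime p)

/-- `Gdim_{R_p}(M_p)`. -/
def locGDim (R : Type u) [CommRing R] (p : Ideal R) [p.IsPrime] (M : Type u) [AddCommGroup M]
    [Module R M] : ℕ∞ :=
  GDim (Localization.AtPrime p) (LocalizedModule p.primeCompl M)

/-- `rgr_{R_p}(M_p)`. -/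
def locRgr (R : Type u) [CommRing R] (p : Ideal R) [p.IsPrime] (M : Type u) [AddCommGroup M]
    [Module R M] : ℕ∞ :=
  rgr (Localization.AtPrime p) (LocalizedModule p.primeCompl M)

/-- `dim_{R_p}(M_p)`, the Krull dimension of the support of `M_p` over `R_p`. -/
def locDim (R : Type u) [CommRing R] (p : Ideal R) [p.IsPrime] (M : Type u) [AddCommGroup M]
    [Module R M] : WithBot ℕ∞ :=
  ringKrullDim ((Localization.AtPrime p) ⧸
    Module.annihilator (Localization.AtPrime p) (LocalizedModule p.primeCompl M))

/-- `M` satisfies the condition `S̃_k`: `depth_{R_p}(M_p) ≥ min{k, depth R_p}` for all primes. -/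
def Stilde (R : Type u) [CommRing R] (k : ℕ) (M : Type u) [AddCommGroup M] [Module R M] : Prop :=
  ∀ (p : Ideal R) (_ : p.IsPrime), min (k : ℕ∞) (locRingDepth R p) ≤ locDepth R p M

/-- `M` satisfies Serre's condition `(S_k)`:
`depth_{R_p}(M_p) ≥ min{k, dim_{R_p}(M_p)}` for all primes. -/
def SerreS (R : Type u) [CommRing R] (k : ℕ) (M : Type u) [AddCommGroup M] [Module R M] : Prop :=
  ∀ (p : Ideal R) (_ : p.IsPrime),
    min (k : WithBot ℕ∞) (locDim R p M) ≤ (locDepth R p M : WithBot ℕ∞)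

/-- `M` is a `k`-th syzygy module. -/
def IsKthSyzygy (R : Type u) [CommRing R] : ℕ → ModuleCat.{u} R → Prop
  | 0, _ => True
  | k + 1, M =>
    ∃ (P : ModuleCat.{u} R) (f : ↥M →ₗ[R] ↥P), Module.Projective R ↥P ∧ Module.Finite R ↥P ∧
      Function.Injective f ∧ IsKthSyzygy R k (ModuleCat.of R (↥P ⧸ LinearMap.range f))

/-- The `I`-torsion submodule `Γ_I(M) = { x | I^n x = 0 for some n }`. -/
def gammaTorsion (R : Type u) [CommRing R] (I : Ideal R) (M : Type u) [AddCommGroup M]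
    [Module R M] : Submodule R M where
  carrier := {x | ∃ n : ℕ, ∀ a ∈ I ^ n, a • x = 0}
  zero_mem' := ⟨0, fun a _ => smul_zero a⟩
  add_mem' := by
    rintro x y ⟨n, hn⟩ ⟨m, hm⟩
    exact ⟨n + m, fun a ha => by
      rw [smul_add, hn a (Ideal.pow_le_pow_right (Nat.le_add_right n m) ha),
        hm a (Ideal.pow_le_pow_right (Nat.le_add_left m n) ha), add_zero]⟩
  smul_mem' := by
    rintro c x ⟨n, hn⟩
    exact ⟨n, fun a ha => by rw [smul_comm, hn a ha, smul_zero]⟩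

/-- `N` has finite flat dimension (characterized by uniform vanishing of `Tor`). -/
def HasFiniteFlatDim (R : Type u) [CommRing R] (N : Type u) [AddCommGroup N] [Module R N] : Prop :=
  ∃ n : ℕ, ∀ i : ℕ, n < i → ∀ (M : ModuleCat.{u} R), Subsingleton (torM R i ↥M N)

/-- `N` has finite injective dimension (characterized by uniform vanishing of `Ext`). -/
def HasFiniteInjDim (R : Type u) [CommRing R] (N : Type u) [AddCommGroup N] [Module R N] : Prop :=
  ∃ n : ℕ, ∀ i : ℕ, n < i → ∀ (M : ModuleCat.{u} R), Subsingleton (extM R i ↥M N)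

/-- `K` is a semidualizing `R`-module. -/
def IsSemidualizing (R : Type u) [CommRing R] (K : Type u) [AddCommGroup K] [Module R K] : Prop :=
  Module.Finite R K ∧ Function.Bijective (LinearMap.lsmul R K) ∧
    ∀ i : ℕ, 0 < i → Subsingleton (extM R i K K)

/-- The biduality map `M → Hom(Hom(M,K),K)`. -/
def evalK (R : Type u) [CommRing R] (K M : Type u) [AddCommGroup K] [Module R K]
    [AddCommGroup M] [Module R M] : M →ₗ[R] ((M →ₗ[R] K) →ₗ[R] K) :=
  LinearMap.applyₗ

/-- `M` has `G_K`-dimension zero. -/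
def IsGKDimZero (R : Type u) [CommRing R] (K M : Type u) [AddCommGroup K] [Module R K]
    [AddCommGroup M] [Module R M] : Prop :=
  Module.Finite R M ∧ Function.Bijective (evalK R K M) ∧
    (∀ i : ℕ, 0 < i → Subsingleton (extM R i M K)) ∧
    (∀ i : ℕ, 0 < i → Subsingleton (extM R i (M →ₗ[R] K) K))

/-- `M` admits a resolution of length `≤ n` by modules of `G_K`-dimension zero. -/
def GKDimLE (R : Type u) [CommRing R] (K : Type u) [AddCommGroup K] [Module R K] :
    ℕ → ModuleCat.{u} R → Prop
  | 0, M => IsGKDimZero R K ↥M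
  | n + 1, M =>
    ∃ (G : ModuleCat.{u} R) (f : ↥G →ₗ[R] ↥M), IsGKDimZero R K ↥G ∧ Function.Surjective f ∧
      GKDimLE R K n (ModuleCat.of R ↥(LinearMap.ker f))

/-- The `G_K`-dimension of `M`. -/
def GKDim (R : Type u) [CommRing R] (K M : Type u) [AddCommGroup K] [Module R K]
    [AddCommGroup M] [Module R M] : ℕ∞ :=
  sInf {n : ℕ∞ | ∃ k : ℕ, n = k ∧ GKDimLE R K k (ModuleCat.of R M)}

/-- The grade of a module, `gr_R(M) = grade(Ann_R(M), R) = inf{i | Ext^i(R/Ann M, R) ≠ 0}`. -/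
def grAnn (R : Type u) [CommRing R] (M : Type u) [AddCommGroup M] [Module R M] : ℕ∞ :=
  egrade R (R ⧸ Module.annihilator R M)

/-- The grade of an ideal, `grade(I) = inf{i | Ext^i(R/I, R) ≠ 0}`. -/
def gradeI (R : Type u) [CommRing R] (I : Ideal R) : ℕ∞ :=
  egrade R (R ⧸ I)

/-- The ideal `I` is `G_K`-Gorenstein: `R/I` is `G_K`-perfect and `Ext^{gr I}(R/I, K)` is
cyclic. -/
def IsGKGorensteinIdeal (R : Type u) [CommRing R] (K : Type u) [AddCommGroup K] [Module R K]
    (I : Ideal R) : Prop :=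
  ∃ n : ℕ, grAnn R (R ⧸ I) = (n : ℕ∞) ∧ GKDim R K (R ⧸ I) = (n : ℕ∞) ∧
    ∃ x : extM R n (R ⧸ I) K, Submodule.span R {x} = ⊤

end

section AuxMaterial
universe u

lemma extMk_zero_inj {C : Type*} [Category C] [Abelian C] [HasExt C] {X Y : C}
    (P : ProjectiveResolution X) (f : P.complex.X 0 ⟶ Y) (hf : P.complex.d 1 0 ≫ f = 0)
    (h : P.extMk f 1 rfl hf = 0) : f = 0 := by
  simp only [← P.extEquivCohomologyClass.apply_eq_iff_eq,
    ProjectiveResolution.extEquivCohomologyClass_extMk, 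
    ProjectiveResolution.extEquivCohomologyClass_zero,
    CochainComplex.HomComplex.CohomologyClass.mk_eq_zero_iff] at h
  rw [CochainComplex.HomComplex.Cocycle.toSingleMk_mem_coboundaries_iff _ _ _ _ _ 1 (by simp)] at h
  obtain ⟨g, hg⟩ := h
  have hz : Limits.IsZero (P.cochainComplex.X 1) := 
    CochainComplex.isZero_of_isStrictlyLE _ 0 1 (by simp)
  have : g = 0 := hz.eq_of_src _ _
  subst this
  rw [← cancel_epi (P.cochainComplexXIso (-0) 0 rfl).hom]
  simpa using hg.symm

abbrev XX (R : Type u) [CommRing R] (M N : Type u) [AddCommGroup M] [Module R M]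
    [AddCommGroup N] [Module R N] (i : ℕ) : Type u :=
  Abelian.Ext (ModuleCat.of R M) (ModuleCat.of R N) i

section
variable {R : Type u} [CommRing R] {X Y : ModuleCat.{u} R} (P : ProjectiveResolution X) 


noncomputable def extMkL (i : ℕ) :
    LinearMap.ker (ModuleCat.Hom.hom ((P.complex.linearYonedaObj R Y).d i (i+1))) →ₗ[R] Abelian.Ext X Y i where
  toFun f := P.extMk (show P.complex.X i ⟶ Y from f.1) (i+1) rfl f.2
  map_add' f g := (P.add_extMk (show P.complex.X i ⟶ Y from f.1) (show P.complex.X i ⟶ Y from g.1)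
    (i+1) rfl f.2 g.2).symm
  map_smul' r f := by
    have h1 := P.extMk_comp_mk₀ (show P.complex.X i ⟶ Y from f.1) (i+1) rfl f.2 (r • 𝟙 Y)
    refine Eq.trans ?_ ((Abelian.Ext.smul_eq_comp_mk₀ _ r).trans h1).symm
    congr 1

lemma extMkL_surj (i : ℕ) : Function.Surjective (extMkL (Y := Y) P i) := by
  intro a
  obtain ⟨f, hf, rfl⟩ := P.extMk_surjective a (i+1) rfl
  exact ⟨⟨f, hf⟩, rfl⟩

lemma bridge_aux (S : ShortComplex (ModuleCat.{u} R)) {E : Type u} [AddCommGroup E] [Module R E]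
    (φ : LinearMap.ker S.g.hom →ₗ[R] E) (hφ : Function.Surjective φ)
    (hk : ∀ x, φ x = 0 ↔ ∃ y, S.f.hom y = x.1) : Nonempty (S.homology ≃ₗ[R] E) := by
  have hh : LinearMap.range S.moduleCatToCycles = LinearMap.ker φ := ?_
  · have e1 : S.homology ≃ₗ[R] (LinearMap.ker S.g.hom ⧸ LinearMap.range S.moduleCatToCycles) :=
      S.moduleCatHomologyIso.toLinearEquiv
    exact ⟨e1.trans ((Submodule.quotEquivOfEq _ _ hh).trans (φ.quotKerEquivOfSurjective hφ))⟩
  ext x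
  rw [LinearMap.mem_ker, hk, LinearMap.mem_range]
  constructor
  · rintro ⟨y, hy⟩; exact ⟨y, by rw [← hy]; rfl⟩
  · rintro ⟨y, hy⟩; exact ⟨y, Subtype.ext hy⟩

theorem bridge {R : Type u} [CommRing R] (M N : Type u) [AddCommGroup M] [Module R M]
    [AddCommGroup N] [Module R N] (i : ℕ) : Nonempty (extM R i M N ≃ₗ[R] XX R M N i) := by
  let P := projectiveResolution (ModuleCat.of R M)
  let K := P.complex.linearYonedaObj R (ModuleCat.of R N)
  have e1 : extM R i M N ≃ₗ[R] K.homology i := (P.isoExt i (ModuleCat.of R N)).toLinearEquiv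
  have e2 : K.homology i ≃ₗ[R] (K.sc' ((ComplexShape.up ℕ).prev i) i (i+1)).homology :=
    (K.homologyIsoSc' _ i (i+1) rfl (by simp)).toLinearEquiv
  obtain ⟨e3⟩ := bridge_aux (K.sc' ((ComplexShape.up ℕ).prev i) i (i+1))
    (extMkL (Y := ModuleCat.of R N) P i) (extMkL_surj P i) (by
      intro x
      rcases i with _ | i
      · have hd : K.d ((ComplexShape.up ℕ).prev 0) 0 = 0 := by
          apply K.shape; simp
        constructor
        · intro h
          have := extMk_zero_inj P (show P.complex.X 0 ⟶ ModuleCat.of R N from x.1) x.2 h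
          exact ⟨0, by rw [map_zero]; exact this.symm⟩
        · rintro ⟨y, hy⟩
          have : x = 0 := by
            apply Subtype.ext
            rw [← hy]
            change (K.d ((ComplexShape.up ℕ).prev 0) 0).hom y = 0
            rw [hd]; rfl
          subst this
          exact (extMkL (Y := ModuleCat.of R N) P 0).map_zero
      · have hp : (ComplexShape.up ℕ).prev (i+1) = i := by simp
        rw [hp]
        exact (P.extMk_eq_zero_iff (show P.complex.X (i+1) ⟶ ModuleCat.of R N from x.1) (i+1+1) rfl x.2 i rfl))
  exact ⟨e1.trans (e2.trans e3)⟩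
end


section API
variable {R : Type u} [CommRing R] {A B C K N : Type u} [AddCommGroup A] [Module R A]
  [AddCommGroup B] [Module R B] [AddCommGroup C] [Module R C] [AddCommGroup K] [Module R K]
  [AddCommGroup N] [Module R N]

noncomputable def xx0 (M N : Type u) [AddCommGroup M] [Module R M] [AddCommGroup N] [Module R N] :
    XX R M N 0 ≃ₗ[R] (M →ₗ[R] N) :=
  (Abelian.Ext.linearEquiv₀ (R := R)).trans ModuleCat.homLinearEquiv

/-- precomposition -/
noncomputable def xpre (f : A →ₗ[R] B) (K : Type u) [AddCommGroup K] [Module R K] (i : ℕ) :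
    XX R B K i →ₗ[R] XX R A K i :=
  (Abelian.Ext.mk₀ (ModuleCat.ofHom f)).precompOfLinear R _ (zero_add i)

lemma xpre_id (i : ℕ) (x : XX R A K i) : xpre (LinearMap.id : A →ₗ[R] A) K i x = x := by
  simp only [xpre, Abelian.Ext.bilinearCompOfLinear_apply_apply]
  exact Abelian.Ext.mk₀_id_comp x

lemma xpre_comp (f : A →ₗ[R] B) (g : B →ₗ[R] C) (i : ℕ) (x : XX R C K i) :
    xpre (g ∘ₗ f) K i x = xpre f K i (xpre g K i x) := by
  simp only [xpre, Abelian.Ext.bilinearCompOfLinear_apply_apply]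
  rw [ModuleCat.ofHom_comp, Abelian.Ext.mk₀_comp_mk₀_assoc]

lemma xpre_add (f g : A →ₗ[R] B) (i : ℕ) (x : XX R B K i) :
    xpre (f + g) K i x = xpre f K i x + xpre g K i x := by
  simp only [xpre, Abelian.Ext.bilinearCompOfLinear_apply_apply]
  rw [ModuleCat.ofHom_add, Abelian.Ext.mk₀_add, Abelian.Ext.add_comp]

lemma xpre_smul (r : R) (f : A →ₗ[R] B) (i : ℕ) (x : XX R B K i) :
    xpre (r • f) K i x = r • xpre f K i x := by
  simp only [xpre, Abelian.Ext.bilinearCompOfLinear_apply_apply]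
  rw [show ModuleCat.ofHom (r • f) = r • ModuleCat.ofHom f from rfl, Abelian.Ext.mk₀_smul, Abelian.Ext.smul_comp]

noncomputable def xcongr (e : A ≃ₗ[R] B) (K : Type u) [AddCommGroup K] [Module R K] (i : ℕ) :
    XX R B K i ≃ₗ[R] XX R A K i :=
  LinearEquiv.ofLinearMap (xpre e.toLinearMap K i) (xpre e.symm.toLinearMap K i)
    (by ext x; simp only [LinearMap.comp_apply, ← xpre_comp, LinearEquiv.comp_coe]
        simpa using xpre_id i x)
    (by ext x; simp only [LinearMap.comp_apply, ← xpre_comp, LinearEquiv.comp_coe]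
        simpa using xpre_id i x)

lemma kills_of_factor (a : R) (f : A →ₗ[R] B) (g : B →ₗ[R] A) (h : ∀ x, g (f x) = a • x) (i : ℕ)
    [Subsingleton (XX R B K i)] (x : XX R A K i) : a • x = 0 := by
  have : g ∘ₗ f = a • LinearMap.id := by ext x; simp [h]
  rw [← xpre_id i x, ← xpre_smul, ← this, xpre_comp, Subsingleton.elim (xpre g K i x) 0, map_zero]

lemma xx_subsingleton_of_proj [Module.Projective R A] (i : ℕ) : Subsingleton (XX R A K (i+1)) := by
  have : Projective (ModuleCat.of R A) := (IsProjective.iff_projective _).mp ‹_›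
  exact ⟨fun a b => (Abelian.Ext.eq_zero_of_projective a).trans (Abelian.Ext.eq_zero_of_projective b).symm⟩

lemma xx_subsingleton_of_inj [Module.Injective R K] (i : ℕ) : Subsingleton (XX R A K (i+1)) := by
  have : Injective (ModuleCat.of R K) := Module.injective_object_of_injective_module R K
  exact ⟨fun a b => (Abelian.Ext.eq_zero_of_injective a).trans (Abelian.Ext.eq_zero_of_injective b).symm⟩

variable (f : A →ₗ[R] B) (g : B →ₗ[R] C) (hf : Function.Injective f) (hg : Function.Surjective g)
  (hfg : Function.Exact f g)

abbrev xS (hfg : Function.Exact f g) : ShortComplex (ModuleCat.{u} R) :=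
  ShortComplex.mk (ModuleCat.ofHom f) (ModuleCat.ofHom g)
    (by ext x; exact hfg.apply_apply_eq_zero x)

include hf hg in
lemma xS_exact : (xS f g hfg).ShortExact := 
  ModuleCat.shortComplex_shortExact _ hfg hf hg

noncomputable def xdel (K : Type u) [AddCommGroup K] [Module R K] (i : ℕ) : 
    XX R A K i →ₗ[R] XX R C K (i+1) :=
  (xS_exact f g hf hg hfg).extClass.precompOfLinear R _ (add_comm 1 i)

lemma xdel_inj (i : ℕ) [Subsingleton (XX R B K i)] : Function.Injective (xdel f g hf hg hfg K i) := by
  rw [injective_iff_map_eq_zero]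
  intro x hx
  obtain ⟨y, rfl⟩ := Abelian.Ext.contravariant_sequence_exact₁ (xS_exact f g hf hg hfg) _ x (add_comm 1 i) hx
  rw [show y = 0 from Subsingleton.elim (α := XX R B K i) _ _]; simp

lemma xdel_surj (i : ℕ) [Subsingleton (XX R B K (i+1))] : Function.Surjective (xdel f g hf hg hfg K i) := by
  intro x
  exact Abelian.Ext.contravariant_sequence_exact₃ (xS_exact f g hf hg hfg) _ x (Subsingleton.elim (α := XX R B K (i+1)) _ _) (add_comm 1 i) 

noncomputable def xdel0 (K : Type u) [AddCommGroup K] [Module R K] : (A →ₗ[R] K) →ₗ[R] XX R C K 1 :=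
  xdel f g hf hg hfg K 0 ∘ₗ (xx0 A K).symm.toLinearMap

lemma xx0_symm_apply (φ : A →ₗ[R] K) : (xx0 A K).symm φ = Abelian.Ext.mk₀ (ModuleCat.ofHom φ) := by
  rfl

lemma xdel0_eq_zero (φ : A →ₗ[R] K) : xdel0 f g hf hg hfg K φ = 0 ↔ ∃ ψ : B →ₗ[R] K, ψ ∘ₗ f = φ := by
  constructor
  · intro h
    obtain ⟨y, hy⟩ := Abelian.Ext.contravariant_sequence_exact₁ (xS_exact f g hf hg hfg) _ _ (add_comm 1 0) h
    obtain ⟨ψ, rfl⟩ := Abelian.Ext.homEquiv₀.symm.surjective y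
    refine ⟨ψ.hom, ?_⟩
    simp only [Abelian.Ext.homEquiv₀_symm_apply, Abelian.Ext.mk₀_comp_mk₀] at hy
    have h2 : Abelian.Ext.mk₀ (ModuleCat.ofHom f ≫ ψ) = Abelian.Ext.mk₀ (ModuleCat.ofHom φ) := hy
    have h3 := Abelian.Ext.homEquiv₀.symm.injective h2
    exact congrArg ModuleCat.Hom.hom h3
  · rintro ⟨ψ, rfl⟩
    have h2 := (xS_exact f g hf hg hfg).extClass_comp_assoc (Abelian.Ext.mk₀ (ModuleCat.ofHom ψ)) (n := 0) (n' := 1) (h := rfl)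
    refine Eq.trans ?_ h2
    simp only [Abelian.Ext.mk₀_comp_mk₀]
    rfl

lemma xdel0_surj [Subsingleton (XX R B K 1)] : Function.Surjective (xdel0 f g hf hg hfg K) :=
  (xdel_surj f g hf hg hfg 0).comp (LinearEquiv.surjective _)

noncomputable def xcon (N : Type u) [AddCommGroup N] [Module R N] (i : ℕ) : 
    XX R N C i →ₗ[R] XX R N A (i+1) :=
  (xS_exact f g hf hg hfg).extClass.postcompOfLinear R _ rfl

lemma xcon_inj (i : ℕ) [Subsingleton (XX R N B i)] : Function.Injective (xcon f g hf hg hfg N i) := by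
  rw [injective_iff_map_eq_zero]
  intro x hx
  obtain ⟨y, rfl⟩ := Abelian.Ext.covariant_sequence_exact₃ _ (xS_exact f g hf hg hfg) x rfl hx
  rw [show y = 0 from Subsingleton.elim (α := XX R N B i) _ _]; simp

lemma xcon_surj (i : ℕ) [Subsingleton (XX R N B (i+1))] : Function.Surjective (xcon f g hf hg hfg N i) := by
  intro x
  exact Abelian.Ext.covariant_sequence_exact₁ _ (xS_exact f g hf hg hfg) x (Subsingleton.elim (α := XX R N B (i+1)) _ _) rfl

noncomputable def xconE (i : ℕ) [Subsingleton (XX R N B i)] [Subsingleton (XX R N B (i+1))] :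
    XX R N C i ≃ₗ[R] XX R N A (i+1) :=
  LinearEquiv.ofBijective _ ⟨xcon_inj f g hf hg hfg i, xcon_surj f g hf hg hfg i⟩

noncomputable def xdelE (i : ℕ) [Subsingleton (XX R B K i)] [Subsingleton (XX R B K (i+1))] :
    XX R A K i ≃ₗ[R] XX R C K (i+1) :=
  LinearEquiv.ofBijective _ ⟨xdel_inj f g hf hg hfg i, xdel_surj f g hf hg hfg i⟩

end API


section TF
variable {R : Type u} [CommRing R]

/-- no nonzero element killed by `I` -/
def TF (I : Ideal R) (X : Type u) [AddCommGroup X] [Module R X] : Prop :=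
  ∀ y : X, (∀ a ∈ I, a • y = 0) → y = 0

lemma TF.pow {I : Ideal R} {X : Type u} [AddCommGroup X] [Module R X] (h : TF I X) (n : ℕ) :
    TF (I ^ n) X := by
  induction n with
  | zero => intro y hy; simpa using hy 1 (by simp)
  | succ n ih =>
    intro y hy
    apply ih
    intro a ha
    apply h
    intro b hb
    rw [smul_smul]
    exact hy _ (by rw [pow_succ, mul_comm b a]; exact Ideal.mul_mem_mul ha hb)

lemma TF.mul {I J : Ideal R} {X : Type u} [AddCommGroup X] [Module R X] (h : TF I X) (h' : TF J X) :
    TF (I * J) X := by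
  intro y hy
  apply h'
  intro a ha
  apply h
  intro b hb
  rw [smul_smul]
  exact hy _ (Ideal.mul_mem_mul hb ha)

variable [IsNoetherianRing R]

lemma gamma_inj (I : Ideal R) (J : Type u) [AddCommGroup J] [Module R J] [Module.Injective R J] :
    Module.Injective R (gammaTorsion R I J) := by
  apply Module.Baer.injective
  intro 𝔞 f
  have h1 : ∃ k : ℕ, ∀ x : 𝔞, ∀ a ∈ I ^ k, a • f x = 0 := by
    obtain ⟨s, hs⟩ := (IsNoetherian.noetherian (⊤ : Submodule R 𝔞))
    have h2 : ∀ x : 𝔞, ∃ n : ℕ, ∀ a ∈ I ^ n, a • f x = 0 := by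
      intro x
      obtain ⟨n, hn⟩ := (f x).2
      exact ⟨n, fun a ha => Subtype.ext (hn a ha)⟩
    choose n hn using h2
    refine ⟨s.sup n, fun x => ?_⟩
    have hx : x ∈ Submodule.span R (s : Set 𝔞) := by rw [hs]; trivial
    induction hx using Submodule.span_induction with
    | mem x hx => 
      intro a ha
      exact hn x a (Ideal.pow_le_pow_right (Finset.le_sup (f := n) hx) ha)
    | zero => intro a _; simp
    | add x y _ _ hx hy => intro a ha; rw [map_add, smul_add, hx a ha, hy a ha, add_zero]
    | smul r x _ hx => intro a ha; rw [map_smul, smul_comm, hx a ha, smul_zero]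
  obtain ⟨k, hk⟩ := h1
  obtain ⟨c, hc⟩ := Ideal.exists_pow_inf_eq_pow_smul I (𝔞 : Submodule R R)
  have hker : ∀ x : 𝔞, x.1 ∈ I ^ (c + k) → f x = 0 := by
    intro x hx
    have h3 : x.1 ∈ (I ^ (c+k) • ⊤ ⊓ 𝔞 : Submodule R R) := ⟨by simpa using hx, x.2⟩
    rw [hc _ (Nat.le_add_right c k), Nat.add_sub_cancel_left] at h3
    have h4 : x.1 ∈ (I ^ k • 𝔞 : Submodule R R) := Submodule.smul_mono le_rfl inf_le_right h3
    have h5 : ∀ y ∈ (I ^ k • 𝔞 : Submodule R R), ∃ hy : y ∈ 𝔞, f ⟨y, hy⟩ = 0 := by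
      intro y hy
      refine Submodule.smul_induction_on hy ?_ ?_
      · intro r hr n hn
        refine ⟨𝔞.smul_mem r hn, ?_⟩
        have := hk ⟨n, hn⟩ r hr
        rw [← map_smul] at this
        exact this
      · rintro x y ⟨hx, hx'⟩ ⟨hy, hy'⟩
        refine ⟨𝔞.add_mem hx hy, ?_⟩
        have := map_add f ⟨x, hx⟩ ⟨y, hy⟩
        rw [hx', hy', add_zero] at this
        exact this
    obtain ⟨_, h6⟩ := h5 _ h4
    exact h6
  let q : 𝔞 →ₗ[R] R ⧸ (I ^ (c+k)) := (Submodule.mkQ (I ^ (c+k))) ∘ₗ 𝔞.subtype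
  have hq : LinearMap.ker q ≤ LinearMap.ker f := by
    intro x hx
    apply hker
    simpa [q, Ideal.Quotient.eq_zero_iff_mem] using hx
  let f' : LinearMap.range q →ₗ[R] J := 
    (gammaTorsion R I J).subtype ∘ₗ ((LinearMap.ker q).liftQ f hq) ∘ₗ q.quotKerEquivRange.symm.toLinearMap
  obtain ⟨g, hg⟩ := Module.Injective.out (R := R) (LinearMap.range q).subtype (Submodule.subtype_injective _) f'
  have hgI : ∀ r : R, g (Submodule.mkQ (I ^ (c+k)) r) ∈ gammaTorsion R I J := by
    intro r
    refine ⟨c + k, fun a ha => ?_⟩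
    rw [← map_smul, ← map_smul]
    have : Submodule.mkQ (I ^ (c+k)) (a • r) = 0 := by
      simp only [Submodule.mkQ_apply]
      rw [Submodule.Quotient.mk_eq_zero]
      exact Ideal.mul_mem_right _ _ ha
    rw [this, map_zero]
  refine ⟨LinearMap.codRestrict _ (g ∘ₗ Submodule.mkQ (I ^ (c+k))) hgI, fun x hx => ?_⟩
  apply Subtype.ext
  have h7 := hg (LinearMap.rangeRestrict q ⟨x, hx⟩)
  simp only [LinearMap.codRestrict_apply, LinearMap.comp_apply]
  refine Eq.trans h7 ?_
  simp only [f', LinearMap.comp_apply]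
  have : q.quotKerEquivRange.symm.toLinearMap (LinearMap.rangeRestrict q ⟨x, hx⟩) = (LinearMap.ker q).mkQ ⟨x, hx⟩ := by
    rw [LinearEquiv.coe_coe, LinearEquiv.symm_apply_eq]
    rfl
  rw [this]
  simp

theorem exists_TF_inj (I : Ideal R) (K : Type u) [AddCommGroup K] [Module R K] (hK : TF I K) :
    ∃ (J : ModuleCat.{u} R) (f : K →ₗ[R] J), Module.Injective R J ∧ Function.Injective f ∧ TF I J := by
  let J₀ : ModuleCat.{u} R := Injective.under (ModuleCat.of R K)
  have hJ : Module.Injective R J₀ := 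
    Module.injective_module_of_injective_object R J₀ (inj := (inferInstance : Injective (Injective.under (ModuleCat.of R K))))
  let ι : K →ₗ[R] J₀ := (Injective.ι (ModuleCat.of R K)).hom
  have hι : Function.Injective ι := (ModuleCat.mono_iff_injective _).mp (Injective.ι_mono (ModuleCat.of R K))
  have hΓ := gamma_inj I J₀
  obtain ⟨ρ, hρ⟩ := hΓ.out (gammaTorsion R I J₀).subtype (Submodule.subtype_injective _) LinearMap.id
  let π : J₀ →ₗ[R] LinearMap.ker ρ := LinearMap.codRestrict _ (LinearMap.id - (gammaTorsion R I J₀).subtype ∘ₗ ρ) (by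
    intro x
    rw [LinearMap.mem_ker, LinearMap.sub_apply, map_sub, LinearMap.comp_apply, hρ]; simp)
  have hπ : ∀ x : LinearMap.ker ρ, π x.1 = x := by
    intro x
    apply Subtype.ext
    have := x.2
    rw [LinearMap.mem_ker] at this
    simp [π, this]
  refine ⟨ModuleCat.of R (LinearMap.ker ρ), π ∘ₗ ι, ⟨?_⟩, ?_, ?_⟩
  · intro X Y _ _ _ _ f hf g
    obtain ⟨h, hh⟩ := hJ.out f hf ((LinearMap.ker ρ).subtype ∘ₗ g)
    refine ⟨π ∘ₗ h, fun x => ?_⟩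
    rw [LinearMap.comp_apply, hh, LinearMap.comp_apply]
    exact hπ _
  · rw [injective_iff_map_eq_zero]
    intro k hk
    have h1 : ι k - (ρ (ι k)).1 = 0 := congrArg Subtype.val hk
    have h2 : ι k ∈ gammaTorsion R I J₀ := by rw [sub_eq_zero.mp h1]; exact (ρ (ι k)).2
    obtain ⟨n, hn⟩ := h2
    apply hK.pow n
    intro a ha
    apply hι
    rw [map_smul, hn a ha, map_zero]
  · intro y hy
    have h1 : y.1 ∈ gammaTorsion R I J₀ := ⟨1, fun a ha => congrArg Subtype.val (hy a (by simpa using ha))⟩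
    have h2 := hρ ⟨y.1, h1⟩
    have h3 : ρ y.1 = 0 := y.2
    have h4 : (⟨y.1, h1⟩ : gammaTorsion R I J₀) = 0 := h2.symm.trans h3
    have h5 : y.1 = 0 := by simpa using h4
    exact Subtype.ext h5
end TF


section EC
variable {R : Type u} [CommRing R]

/-- `N` is killed by `I` -/
def KB (I : Ideal R) (N : Type u) [AddCommGroup N] [Module R N] : Prop :=
  ∀ a ∈ I, ∀ y : N, a • y = 0

lemma KB_quot (I : Ideal R) : KB I (R ⧸ I) := by
  intro a ha y
  obtain ⟨r, rfl⟩ := Ideal.Quotient.mk_surjective y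
  rw [← Ideal.Quotient.mk_eq_mk, ← Submodule.Quotient.mk_smul, Submodule.Quotient.mk_eq_zero]
  exact Ideal.mul_mem_right _ _ ha

lemma KB.mono {I J : Ideal R} {N : Type u} [AddCommGroup N] [Module R N] (h : KB I N) (hle : J ≤ I) : 
    KB J N := fun a ha y => h a (hle ha) y

lemma hom_sub_of_TF {I : Ideal R} {N J : Type u} [AddCommGroup N] [Module R N] [AddCommGroup J]
    [Module R J] (hN : KB I N) (hJ : TF I J) : Subsingleton (N →ₗ[R] J) := by
  have : ∀ f : N →ₗ[R] J, f = 0 := by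
    intro f
    ext y
    apply hJ
    intro a ha
    rw [← map_smul, hN a ha, map_zero]
  exact ⟨fun a b => (this a).trans (this b).symm⟩

lemma xx_sub_of_TF {I : Ideal R} {N J : Type u} [AddCommGroup N] [Module R N] [AddCommGroup J]
    [Module R J] [Module.Injective R J] (hN : KB I N) (hJ : TF I J) (i : ℕ) : Subsingleton (XX R N J i) := by
  rcases i with _ | i
  · have := hom_sub_of_TF hN hJ
    exact (xx0 N J).toEquiv.subsingleton
  · exact xx_subsingleton_of_inj i

/-- the map from `R/c` given by an element killed by `c` -/
noncomputable def ofElt (c : Ideal R) {K : Type u} [AddCommGroup K] [Module R K] (y : K)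
    (hy : ∀ a ∈ c, a • y = 0) : (R ⧸ c) →ₗ[R] K :=
  Submodule.liftQ c (LinearMap.toSpanSingleton R K y) (fun a ha => hy a ha)

lemma ofElt_one (c : Ideal R) {K : Type u} [AddCommGroup K] [Module R K] (y : K)
    (hy : ∀ a ∈ c, a • y = 0) : ofElt c y hy (1 : R ⧸ c) = y := by
  have : ofElt c y hy (Submodule.Quotient.mk (1:R)) = y := by
    exact (one_smul R y)
  exact this

lemma TF_of_hom {c : Ideal R} {K : Type u} [AddCommGroup K] [Module R K]
    (h : Subsingleton ((R ⧸ c) →ₗ[R] K)) : TF c K := by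
  intro y hy
  rw [← ofElt_one c y hy, Subsingleton.elim (ofElt c y hy) 0, LinearMap.zero_apply]

lemma TF_of_xx0 {c : Ideal R} {K : Type u} [AddCommGroup K] [Module R K]
    (h : Subsingleton (XX R (R ⧸ c) K 0)) : TF c K :=
  TF_of_hom (xx0 (R ⧸ c) K).symm.toEquiv.subsingleton

lemma exact_mk_range {A B : Type u} [AddCommGroup A] [Module R A] [AddCommGroup B] [Module R B]
    (f : A →ₗ[R] B) : Function.Exact f (LinearMap.range f).mkQ := by
  intro x
  rw [Submodule.mkQ_apply, Submodule.Quotient.mk_eq_zero]; rfl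

variable [IsNoetherianRing R]

theorem exists_E (c₁ c₂ : Ideal R) (n : ℕ) : ∀ (K : Type u) [AddCommGroup K] [Module R K],
    (∀ i < n, Subsingleton (XX R (R ⧸ c₁) K i)) → (∀ i < n, Subsingleton (XX R (R ⧸ c₂) K i)) →
    ∃ E : ModuleCat.{u} R, ∀ (N : Type u) [AddCommGroup N] [Module R N], KB (c₁ * c₂) N → 
      ∀ i, Nonempty (XX R N K (n+i) ≃ₗ[R] XX R N E i) := by
  induction n with
  | zero => 
    intro K _ _ _ _ 
    refine ⟨ModuleCat.of R K, fun N _ _ _ i => ?_⟩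
    rw [zero_add]
    exact ⟨LinearEquiv.refl _ _⟩
  | succ n ih =>
    intro K _ _ h1 h2
    have t1 := TF_of_xx0 (h1 0 (by omega))
    have t2 := TF_of_xx0 (h2 0 (by omega))
    obtain ⟨J, f, hJ, hf, tJ⟩ := exists_TF_inj (c₁ * c₂) K (t1.mul t2)
    have key : ∀ (N : Type u) [AddCommGroup N] [Module R N], KB (c₁ * c₂) N → ∀ i, 
        Nonempty (XX R N (J ⧸ LinearMap.range f) i ≃ₗ[R] XX R N K (i+1)) := by
      intro N _ _ hN i
      have := xx_sub_of_TF hN tJ i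
      have := xx_sub_of_TF hN tJ (i+1)
      exact ⟨xconE f (LinearMap.range f).mkQ hf (Submodule.mkQ_surjective _) (exact_mk_range f) i⟩
    obtain ⟨E, hE⟩ := ih (J ⧸ LinearMap.range f) 
      (fun i hi => by
        obtain ⟨e⟩ := key (R ⧸ c₁) ((KB_quot c₁).mono Ideal.mul_le_left) i
        have := h1 (i+1) (by omega)
        exact e.toEquiv.subsingleton)
      (fun i hi => by
        obtain ⟨e⟩ := key (R ⧸ c₂) ((KB_quot c₂).mono Ideal.mul_le_right) i
        have := h2 (i+1) (by omega)
        exact e.toEquiv.subsingleton)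
    refine ⟨E, fun N _ _ hN i => ?_⟩
    obtain ⟨e1⟩ := hE N hN i
    obtain ⟨e2⟩ := key N hN (n+i)
    rw [show n + 1 + i = n + i + 1 by omega]
    exact ⟨e2.symm.trans e1⟩
end EC


section SD

lemma exists_nonzero_dual {D Q : Type*} [CommRing D] [IsDomain D] [AddCommGroup Q] [Module D Q]
    [Module.Finite D Q] (h : ∀ s : D, s ≠ 0 → ∃ q : Q, s • q ≠ 0) : ∃ φ : Q →ₗ[D] D, φ ≠ 0 := by
  classical
  obtain ⟨S, hS⟩ := Module.Finite.fg_top (R := D) (M := Q)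
  let v : S → Q := fun i => i.1
  obtain ⟨I, hI, hmax⟩ := exists_maximal_linearIndepOn D v
  have h1 : ∀ i : S, ∃ a : D, a ≠ 0 ∧ a • v i ∈ Submodule.span D (v '' I) := by
    intro i
    by_cases hi : i ∈ I
    · exact ⟨1, one_ne_zero, by rw [one_smul]; exact Submodule.subset_span ⟨i, hi, rfl⟩⟩
    · exact hmax i hi
  choose a ha ha' using h1
  have hA : (∏ i, a i) ≠ 0 := Finset.prod_ne_zero_iff.mpr (fun i _ => ha i)
  have hr : v '' I = Set.range (fun i : I => v i.1) := by
    ext x; simp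
  have h2 : ∀ q : Q, (∏ i, a i) • q ∈ Submodule.span D (Set.range (fun i : I => v i.1)) := by
    intro q
    rw [← hr]
    have hq : q ∈ Submodule.span D (S : Set Q) := by rw [hS]; trivial
    induction hq using Submodule.span_induction with
    | mem x hx =>
      obtain ⟨b, hb⟩ := Finset.dvd_prod_of_mem a (Finset.mem_univ (⟨x, hx⟩ : S))
      rw [hb, mul_comm, mul_smul]
      exact Submodule.smul_mem _ _ (ha' ⟨x, hx⟩)
    | zero => simp
    | add x y _ _ hx hy => rw [smul_add]; exact Submodule.add_mem _ hx hy
    | smul r x _ hx => rw [smul_comm]; exact Submodule.smul_mem _ _ hx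
  obtain ⟨q, hq⟩ := h _ hA
  let b := Module.Basis.span hI
  let ψ : Q →ₗ[D] Submodule.span D (Set.range (fun i : I => v i.1)) :=
    LinearMap.codRestrict _ ((∏ i, a i) • LinearMap.id) h2
  have hψ : ψ q ≠ 0 := by
    intro h
    exact hq (congrArg Subtype.val h)
  by_contra hcon
  push Not at hcon
  apply hψ
  apply b.repr.injective
  ext i
  have := hcon ((Finsupp.lapply i) ∘ₗ b.repr.toLinearMap ∘ₗ ψ)
  simpa using congrArg (fun f => f q) this

variable {R : Type u} [CommRing R]

lemma not_killed {p : Ideal R} (hprime : p.IsPrime) {K : Type u} [AddCommGroup K] [Module R K]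
    [Module.Finite R K] (hfaith : ∀ r : R, (∀ k : K, r • k = 0) → r = 0) (s : R) (hs' : s ∉ p)
    (hcon : ∀ k : K, s • k ∈ (p • ⊤ : Submodule R K)) : False := by
  obtain ⟨P, hmon, -, hco, hae⟩ := 
    LinearMap.exists_monic_and_natDegree_eq_and_coeff_mem_pow_and_aeval_eq_zero 
      R (algebraMap R (Module.End R K) s) p (by
        rintro _ ⟨k, rfl⟩
        exact hcon k)
  have h0 : P.eval s = 0 := by
    apply hfaith
    intro k
    rw [Polynomial.aeval_algebraMap_apply] at hae
    have := congrArg (fun f => f k) hae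
    simpa using this
  have h1 : s ^ P.natDegree ∈ p := by
    rw [Polynomial.eval_eq_sum_range, Finset.sum_range_succ, hmon.coeff_natDegree, one_mul] at h0
    rw [eq_neg_of_add_eq_zero_right h0]
    refine p.neg_mem (p.sum_mem fun i hi => p.mul_mem_right _ ?_)
    have hi' := Finset.mem_range.mp hi
    exact Ideal.pow_le_self (by omega) (hco i)
  exact hs' (hprime.mem_of_pow_mem _ h1)

lemma exists_nonzero_map {p : Ideal R} (hprime : p.IsPrime) {K : Type u} [AddCommGroup K] [Module R K]
    [Module.Finite R K] (hfaith : ∀ r : R, (∀ k : K, r • k = 0) → r = 0) :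
    ∃ φ : K →ₗ[R] (R ⧸ p), φ ≠ 0 := by
  have hfin : Module.Finite (R ⧸ p) (K ⧸ (p • ⊤ : Submodule R K)) := 
    Module.Finite.of_restrictScalars_finite R _ _
  obtain ⟨φ, hφ⟩ := exists_nonzero_dual (D := R ⧸ p) (Q := K ⧸ (p • ⊤ : Submodule R K)) (by
    intro s hs
    obtain ⟨s, rfl⟩ := Ideal.Quotient.mk_surjective s
    by_contra hcon
    push Not at hcon
    have hs' : s ∉ p := fun h => hs (Ideal.Quotient.eq_zero_iff_mem.mpr h)
    refine not_killed hprime hfaith s hs' (fun k => ?_)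
    have := hcon (Submodule.Quotient.mk k)
    rw [← Submodule.Quotient.mk_eq_zero]
    exact this)
  refine ⟨(φ.restrictScalars R) ∘ₗ (Submodule.mkQ _), fun h => hφ ?_⟩
  refine LinearMap.ext fun q => ?_
  obtain ⟨k, rfl⟩ := Submodule.Quotient.mk_surjective _ q
  exact LinearMap.congr_fun h k

lemma TF_of_TF_hom [IsNoetherianRing R] {c : Ideal R} {K L : Type u} [AddCommGroup K] [Module R K]
    [Module.Finite R K] [AddCommGroup L] [Module R L] (hfaith : ∀ r : R, (∀ k : K, r • k = 0) → r = 0)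
    (h : TF c (K →ₗ[R] L)) : TF c L := by
  intro y hy
  by_contra hne
  obtain ⟨p, hp, hle⟩ := exists_le_isAssociatedPrime_of_isNoetherianRing R y hne
  obtain ⟨hprime, z, hz⟩ := isAssociatedPrime_iff.mp hp
  have hcp : c ≤ p := fun a ha => hle (by rw [Submodule.mem_colon_singleton]; exact hy a ha)
  have hz' : ∀ a, a ∈ p ↔ a • z = 0 := fun a => by rw [hz, Submodule.mem_colon_singleton]; rfl
  obtain ⟨φ, hφ⟩ := exists_nonzero_map hprime hfaith
  let ζ : (R ⧸ p) →ₗ[R] L := ofElt p z (fun a ha => (hz' a).mp ha)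
  have hζ : Function.Injective ζ := by
    rw [injective_iff_map_eq_zero]
    intro r hr
    obtain ⟨r, rfl⟩ := Ideal.Quotient.mk_surjective r
    have : r • z = 0 := hr
    exact Ideal.Quotient.eq_zero_iff_mem.mpr ((hz' r).mpr this)
  have hθ : ζ ∘ₗ φ = 0 := by
    apply h
    intro a ha
    ext k
    change a • ζ (φ _) = 0
    rw [← map_smul, KB_quot p a (hcp ha), map_zero]
  apply hφ
  ext k
  apply hζ
  rw [LinearMap.zero_apply, map_zero]
  exact LinearMap.congr_fun hθ k
end SD


section SD2
variable {R : Type u} [CommRing R]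

lemma xx_sub_congr {A B N : Type u} [AddCommGroup A] [Module R A] [AddCommGroup B] [Module R B]
    [AddCommGroup N] [Module R N] (e : A ≃ₗ[R] B) (i : ℕ) (h : Subsingleton (XX R N A i)) : 
    Subsingleton (XX R N B i) := by
  have : ∀ x : XX R N B i, x = 0 := by
    intro x
    have h1 : ModuleCat.ofHom e.symm.toLinearMap ≫ ModuleCat.ofHom e.toLinearMap = 𝟙 (ModuleCat.of R B) := by
      ext x; simp
    rw [← Abelian.Ext.comp_mk₀_id x, ← h1, ← Abelian.Ext.mk₀_comp_mk₀, 
      ← Abelian.Ext.comp_assoc_of_second_deg_zero,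
      Subsingleton.elim (α := XX R N A i) (x.comp (Abelian.Ext.mk₀ (ModuleCat.ofHom e.symm.toLinearMap)) (add_zero i)) 0,
      Abelian.Ext.zero_comp]
  exact ⟨fun a b => (this a).trans (this b).symm⟩

lemma inj_of_equiv {A B : Type u} [AddCommGroup A] [Module R A] [AddCommGroup B] [Module R B]
    (e : A ≃ₗ[R] B) (h : Module.Injective R A) : Module.Injective R B := by
  refine ⟨fun X Y _ _ _ _ f hf g => ?_⟩
  obtain ⟨k, hk⟩ := h.out f hf (e.symm.toLinearMap ∘ₗ g)
  refine ⟨e.toLinearMap ∘ₗ k, fun x => ?_⟩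
  simp [hk]

/-- lifting along a surjection when Ext^1 with the kernel vanishes -/
lemma lift_of_xx1 {A B C N : Type u} [AddCommGroup A] [Module R A] [AddCommGroup B] [Module R B]
    [AddCommGroup C] [Module R C] [AddCommGroup N] [Module R N] (f : A →ₗ[R] B) (g : B →ₗ[R] C)
    (hf : Function.Injective f) (hg : Function.Surjective g) (hfg : Function.Exact f g)
    (h : Subsingleton (XX R N A 1)) (φ : N →ₗ[R] C) : ∃ ψ : N →ₗ[R] B, g ∘ₗ ψ = φ := by
  obtain ⟨y, hy⟩ := Abelian.Ext.covariant_sequence_exact₃ _ (xS_exact f g hf hg hfg) 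
    (Abelian.Ext.mk₀ (ModuleCat.ofHom φ)) (n₁ := 1) rfl (Subsingleton.elim (α := XX R N A 1) _ _)
  obtain ⟨ψ, rfl⟩ := Abelian.Ext.homEquiv₀.symm.surjective y
  refine ⟨ψ.hom, ?_⟩
  simp only [Abelian.Ext.homEquiv₀_symm_apply, Abelian.Ext.mk₀_comp_mk₀] at hy
  have h3 := Abelian.Ext.homEquiv₀.symm.injective hy
  exact congrArg ModuleCat.Hom.hom h3

lemma TF_hom {c : Ideal R} {K J : Type u} [AddCommGroup K] [Module R K] [AddCommGroup J] [Module R J]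
    (h : TF c J) : TF c (K →ₗ[R] J) := by
  intro φ hφ
  ext x
  exact h _ (fun a ha => LinearMap.congr_fun (hφ a ha) x)

lemma xx_hom_inj {c : Ideal R} {J N : Type u} [AddCommGroup J] [Module R J] [AddCommGroup N]
    [Module R N] [Module.Injective R J] (hJ : TF c J) (hN : KB c N) (j : ℕ) :
    ∀ (K : Type u) [AddCommGroup K] [Module R K], Subsingleton (XX R N (K →ₗ[R] J) j) := by
  induction j with
  | zero => 
    intro K _ _
    have := hom_sub_of_TF hN (TF_hom (K := K) hJ)
    exact (xx0 N (K →ₗ[R] J)).toEquiv.subsingleton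
  | succ j ih =>
    intro K _ _
    let π : (K →₀ R) →ₗ[R] K := Finsupp.linearCombination R id
    have hπ : Function.Surjective π := Finsupp.linearCombination_id_surjective R K
    have hFinj : Module.Injective R ((K →₀ R) →ₗ[R] J) := 
      inj_of_equiv (Finsupp.llift J R R K) inferInstance
    have h1 : Subsingleton (XX R N ((K →₀ R) →ₗ[R] J) (j+1)) := xx_subsingleton_of_inj j
    have h2 := ih (LinearMap.ker π)
    let f : (K →ₗ[R] J) →ₗ[R] ((K →₀ R) →ₗ[R] J) := LinearMap.lcomp R J π
    let g : ((K →₀ R) →ₗ[R] J) →ₗ[R] (LinearMap.ker π →ₗ[R] J) := LinearMap.lcomp R J (LinearMap.ker π).subtype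
    have hf : Function.Injective f := LinearMap.lcomp_injective_of_surjective _ hπ
    have hg : Function.Surjective g := by
      intro φ
      obtain ⟨ψ, hψ⟩ := Module.Injective.out (R := R) (Q := J) (X := LinearMap.ker π) (Y := K →₀ R) (LinearMap.ker π).subtype (Submodule.subtype_injective _) φ
      exact ⟨ψ, LinearMap.ext hψ⟩
    have hfg : Function.Exact f g := by
      intro φ
      constructor
      · intro h
        have hk : LinearMap.ker π ≤ LinearMap.ker φ := fun x hx => LinearMap.congr_fun h ⟨x, hx⟩
        refine ⟨(LinearMap.ker π).liftQ φ hk ∘ₗ (π.quotKerEquivOfSurjective hπ).symm.toLinearMap, ?_⟩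
        refine LinearMap.ext fun x => ?_
        change (LinearMap.ker π).liftQ φ hk ((π.quotKerEquivOfSurjective hπ).symm (π x)) = φ x
        have : (π.quotKerEquivOfSurjective hπ).symm (π x) = Submodule.Quotient.mk x := by
          rw [LinearEquiv.symm_apply_eq]; rfl
        rw [this, Submodule.liftQ_apply]
      · rintro ⟨ψ, rfl⟩
        refine LinearMap.ext fun x => ?_
        change ψ (π x.1) = 0
        rw [x.2, map_zero]
    exact (xcon_surj f g hf hg hfg j).subsingleton

variable [IsNoetherianRing R]

lemma xx_of_hom (c : Ideal R) (K : Type u) [AddCommGroup K] [Module R K] [Module.Finite R K]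
    (hfaith : ∀ r : R, (∀ k : K, r • k = 0) → r = 0) (n : ℕ) : 
    ∀ (L : Type u) [AddCommGroup L] [Module R L], (∀ j, Subsingleton (XX R K L (j+1))) →
    (∀ j < n, Subsingleton (XX R (R ⧸ c) (K →ₗ[R] L) j)) → ∀ j < n, Subsingleton (XX R (R ⧸ c) L j) := by
  induction n with
  | zero => intro L _ _ _ _ j hj; omega
  | succ n ih =>
    intro L _ _ hKL h
    have tL : TF c L := TF_of_TF_hom hfaith (TF_of_xx0 (h 0 (by omega)))
    obtain ⟨J, f, hJ, hf, tJ⟩ := exists_TF_inj c L tL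
    have hex := exact_mk_range f
    have hsu := Submodule.mkQ_surjective (LinearMap.range f)
    have hL' := ih (J ⧸ LinearMap.range f) (by
        intro j
        have : Subsingleton (XX R K J (j+1)) := xx_subsingleton_of_inj j
        have := hKL (j+1)
        exact (xcon_inj (N := K) f _ hf hsu hex (j+1)).subsingleton)
      (by
        intro j hj
        have := xx_hom_inj tJ (KB_quot c) j K
        have := h (j+1) (by omega)
        let f' : (K →ₗ[R] L) →ₗ[R] (K →ₗ[R] J) := LinearMap.compRight R f
        let g' : (K →ₗ[R] J) →ₗ[R] (K →ₗ[R] (J ⧸ LinearMap.range f)) := 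
          LinearMap.compRight R (LinearMap.range f).mkQ
        refine (xcon_inj (N := R ⧸ c) f' g' ?_ ?_ ?_ j).subsingleton
        · intro φ ψ hφ
          refine LinearMap.ext fun x => hf (LinearMap.congr_fun hφ x)
        · intro φ
          exact lift_of_xx1 f _ hf hsu hex (hKL 0) φ
        · intro φ
          constructor
          · intro h
            have hr : ∀ x, φ x ∈ LinearMap.range f := fun x => (hex (φ x)).mp (LinearMap.congr_fun h x)
            refine ⟨(LinearEquiv.ofInjective f hf).symm.toLinearMap ∘ₗ LinearMap.codRestrict _ φ hr, ?_⟩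
            refine LinearMap.ext fun x => ?_
            change f ((LinearEquiv.ofInjective f hf).symm ⟨φ x, hr x⟩) = φ x
            exact congrArg Subtype.val ((LinearEquiv.ofInjective f hf).apply_symm_apply ⟨φ x, hr x⟩)
          · rintro ⟨ψ, rfl⟩
            refine LinearMap.ext fun x => (hex (f (ψ x))).mpr ⟨_, rfl⟩)
    intro j hj
    rcases j with _ | j
    · have := hom_sub_of_TF (KB_quot c) tL
      exact (xx0 (R ⧸ c) L).toEquiv.subsingleton
    · have := hL' j (by omega)
      have : Subsingleton (XX R (R ⧸ c) J (j+1)) := xx_subsingleton_of_inj j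
      exact (xcon_surj (N := R ⧸ c) f _ hf hsu hex j).subsingleton

theorem xx_K_of_R (c : Ideal R) (K : Type u) [AddCommGroup K] [Module R K] (hK : IsSemidualizing R K)
    (n : ℕ) (h : ∀ j < n, Subsingleton (XX R (R ⧸ c) R j)) : 
    ∀ j < n, Subsingleton (XX R (R ⧸ c) K j) := by
  obtain ⟨h1, h2, h3⟩ := hK
  apply xx_of_hom c K
  · intro r hr
    apply h2.1
    ext k
    simp [hr]
  · intro j
    obtain ⟨e⟩ := bridge (R := R) K K (j+1)
    have := h3 (j+1) (by omega)
    exact e.symm.toEquiv.subsingleton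
  · intro j hj
    exact xx_sub_congr (LinearEquiv.ofBijective _ h2) j (h j hj)
end SD2


section GK
variable {R : Type u} [CommRing R] {K : Type u} [AddCommGroup K] [Module R K]

lemma gk0_ext {G : Type u} [AddCommGroup G] [Module R G] (h : IsGKDimZero R K G) (i : ℕ) :
    Subsingleton (XX R G K (i+1)) := by
  obtain ⟨e⟩ := bridge (R := R) G K (i+1)
  have := h.2.2.1 (i+1) (by omega)
  exact e.symm.toEquiv.subsingleton

lemma gk0_ext' {G : Type u} [AddCommGroup G] [Module R G] (h : IsGKDimZero R K G) (i : ℕ) :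
    Subsingleton (XX R (G →ₗ[R] K) K (i+1)) := by
  obtain ⟨e⟩ := bridge (R := R) (G →ₗ[R] K) K (i+1)
  have := h.2.2.2 (i+1) (by omega)
  exact e.symm.toEquiv.subsingleton

lemma exact_ker {A B : Type u} [AddCommGroup A] [Module R A] [AddCommGroup B] [Module R B]
    (f : A →ₗ[R] B) : Function.Exact (LinearMap.ker f).subtype f := by
  intro x
  simp

lemma gk_vanish (n : ℕ) : ∀ M : ModuleCat.{u} R, GKDimLE R K n M → ∀ i, n < i → 
    Subsingleton (XX R M K i) := by
  induction n with
  | zero =>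
    intro M h i hi
    obtain ⟨i, rfl⟩ : ∃ j, i = j + 1 := ⟨i - 1, by omega⟩
    exact gk0_ext h i
  | succ n ih =>
    rintro M ⟨G, f, hG, hf, h⟩ i hi
    obtain ⟨i, rfl⟩ : ∃ j, i = j + 1 := ⟨i - 1, by omega⟩
    have := ih _ h i (by omega)
    have := gk0_ext hG i
    exact (xdel_surj (K := K) (LinearMap.ker f).subtype f (Submodule.subtype_injective _) hf (exact_ker f) i).subsingleton

lemma gk_step {G M : Type u} [AddCommGroup G] [Module R G] [AddCommGroup M] [Module R M]
    (hG : IsGKDimZero R K G) (f : G →ₗ[R] M) (hf : Function.Surjective f) (a : R) (k : ℕ)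
    (h1 : ∀ i, 1 ≤ i → i < k + 1 → Subsingleton (XX R M K i)) (h2 : ∀ x : XX R M K (k+1), a • x = 0) :
    (k = 0 → ∀ ψ : LinearMap.ker f →ₗ[R] K, ∃ φ : G →ₗ[R] K, φ ∘ₗ (LinearMap.ker f).subtype = a • ψ) ∧
    (0 < k → (∀ ψ : LinearMap.ker f →ₗ[R] K, ∃ φ : G →ₗ[R] K, φ ∘ₗ (LinearMap.ker f).subtype = ψ) ∧
      (∀ i, 1 ≤ i → i < k → Subsingleton (XX R (LinearMap.ker f) K i)) ∧
      ∀ x : XX R (LinearMap.ker f) K k, a • x = 0) := by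
  have hi := Submodule.subtype_injective (LinearMap.ker f)
  refine ⟨?_, fun hk => ⟨?_, ?_, ?_⟩⟩
  · rintro rfl ψ
    rw [← xdel0_eq_zero _ f hi hf (exact_ker f), map_smul]
    exact h2 _
  · intro ψ
    have := h1 1 le_rfl (by omega)
    rw [← xdel0_eq_zero _ f hi hf (exact_ker f)]
    exact Subsingleton.elim _ _
  · intro i hi1 hik
    obtain ⟨i, rfl⟩ : ∃ j, i = j + 1 := ⟨i - 1, by omega⟩
    have := h1 (i+1+1) (by omega) (by omega)
    have := gk0_ext hG i
    exact (xdel_inj (K := K) _ f hi hf (exact_ker f) (i+1)).subsingleton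
  · intro x
    obtain ⟨k, rfl⟩ : ∃ j, k = j + 1 := ⟨k - 1, by omega⟩
    have := gk0_ext hG k
    apply xdel_inj (K := K) _ f hi hf (exact_ker f) (k+1)
    rw [map_smul, map_zero]
    exact h2 _

theorem gkV (a : R) (k : ℕ) : ∀ (M : ModuleCat.{u} R) (W : Type u) [AddCommGroup W] [Module R W]
    (j : W →ₗ[R] (M →ₗ[R] K)), GKDimLE R K k M → Function.Injective j →
    (k = 0 → ∀ ψ, ∃ w, j w = a • ψ) → 
    (0 < k → Function.Surjective j ∧ (∀ i, 1 ≤ i → i < k → Subsingleton (XX R M K i)) ∧ 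
      ∀ x : XX R M K k, a • x = 0) →
    (∀ (i : ℕ) (x : XX R W K (i+1)), a • x = 0) ∧ ∀ φ : W →ₗ[R] K, ∃ z : M, ∀ w, a • φ w = (j w) z := by
  induction k with
  | zero =>
    intro M W _ _ j hM hj h0 _
    choose g hg using h0 rfl
    let g' : (M →ₗ[R] K) →ₗ[R] W := 
      { toFun := g
        map_add' := fun x y => hj (by rw [map_add, hg, hg, hg, smul_add])
        map_smul' := fun r x => hj (by rw [map_smul, hg, hg, RingHom.id_apply, smul_comm]) }
    have hgj : ∀ w, g' (j w) = a • w := fun w => hj (by rw [map_smul]; exact hg _)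
    constructor
    · intro i x
      have := gk0_ext' hM i
      exact kills_of_factor a j g' hgj (i+1) x
    · intro φ
      obtain ⟨z, hz⟩ := hM.2.1.2 (φ ∘ₗ g')
      refine ⟨z, fun w => ?_⟩
      have := LinearMap.congr_fun hz (j w)
      rw [LinearMap.comp_apply, hgj, map_smul] at this
      exact this.symm
  | succ k ih =>
    rintro M W _ _ j ⟨G, f, hG, hf, hM3⟩ hj - h1
    obtain ⟨hjs, h2, h3⟩ := h1 (by omega)
    obtain ⟨s0, s1⟩ := gk_step hG f hf a k h2 h3
    let r : (G →ₗ[R] K) →ₗ[R] (LinearMap.ker f →ₗ[R] K) := LinearMap.lcomp R K (LinearMap.ker f).subtype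
    have hA := (ih (ModuleCat.of R (LinearMap.ker f)) (LinearMap.range r) (LinearMap.range r).subtype hM3
      (Submodule.subtype_injective _) 
      (fun hk ψ => by
        obtain ⟨φ, hφ⟩ := s0 hk ψ
        exact ⟨⟨r φ, ⟨φ, rfl⟩⟩, hφ⟩)
      (fun hk => by
        obtain ⟨t1, t2, t3⟩ := s1 hk
        refine ⟨fun ψ => ?_, t2, t3⟩
        obtain ⟨φ, hφ⟩ := t1 ψ
        exact ⟨⟨r φ, ⟨φ, rfl⟩⟩, hφ⟩)).1
    let α : W →ₗ[R] (G →ₗ[R] K) := LinearMap.lcomp R K f ∘ₗ j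
    have hα : Function.Injective α := (LinearMap.lcomp_injective_of_surjective _ hf).comp hj
    have hex : Function.Exact α r.rangeRestrict := by
      intro φ
      constructor
      · intro h
        have hr : r φ = 0 := congrArg Subtype.val h
        have hk : LinearMap.ker f ≤ LinearMap.ker φ := fun x hx => LinearMap.congr_fun hr ⟨x, hx⟩
        obtain ⟨w, hw⟩ := hjs ((LinearMap.ker f).liftQ φ hk ∘ₗ (f.quotKerEquivOfSurjective hf).symm.toLinearMap)
        refine ⟨w, ?_⟩
        refine LinearMap.ext fun x => ?_
        change (j w) (f x) = φ x
        rw [hw]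
        change (LinearMap.ker f).liftQ φ hk ((f.quotKerEquivOfSurjective hf).symm (f x)) = φ x
        have : (f.quotKerEquivOfSurjective hf).symm (f x) = Submodule.Quotient.mk x := by
          rw [LinearEquiv.symm_apply_eq]; rfl
        rw [this, Submodule.liftQ_apply]
      · rintro ⟨w, rfl⟩
        apply Subtype.ext
        refine LinearMap.ext fun x => ?_
        change (j w) (f x.1) = 0
        rw [x.2, map_zero]
    have hs := LinearMap.surjective_rangeRestrict r
    constructor
    · intro i x
      have := gk0_ext' hG i
      apply xdel_inj (K := K) α _ hα hs hex (i+1)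
      rw [map_smul, map_zero]
      exact hA _ _
    · intro φ
      obtain ⟨Φ, hΦ⟩ := (xdel0_eq_zero α _ hα hs hex (a • φ)).mp (by rw [map_smul]; exact hA 0 _)
      obtain ⟨g, rfl⟩ := hG.2.1.2 Φ
      exact ⟨f g, fun w => (LinearMap.congr_fun hΦ w).symm⟩

theorem gk_ann (a : R) (n : ℕ) (S : Type u) [AddCommGroup S] [Module R S] 
    (h : GKDimLE R K n (ModuleCat.of R S))
    (h1 : ∀ i < n, Subsingleton (XX R S K i)) (h2 : ∀ x : XX R S K n, a • x = 0) (s : S) : a • s = 0 := by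
  rcases n with _ | k
  · have h3 : Function.Bijective (evalK R K S) := h.2.1
    apply h3.1
    ext ψ
    have := congrArg (xx0 S K) (h2 ((xx0 S K).symm ψ))
    rw [map_smul, map_zero, LinearEquiv.apply_symm_apply] at this
    have := LinearMap.congr_fun this s
    rw [map_smul, map_zero]
    exact this
  · obtain ⟨G, f, hG, hf, hM⟩ := h
    obtain ⟨s0, s1⟩ := gk_step hG f hf a k (fun i _ hi => h1 i hi) h2
    let r : (G →ₗ[R] K) →ₗ[R] (LinearMap.ker f →ₗ[R] K) := LinearMap.lcomp R K (LinearMap.ker f).subtype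
    have hr : Function.Injective r := by
      rw [injective_iff_map_eq_zero]
      intro φ hφ
      have hk : LinearMap.ker f ≤ LinearMap.ker φ := fun x hx => LinearMap.congr_fun hφ ⟨x, hx⟩
      have h0 := h1 0 (by omega)
      have : Subsingleton (S →ₗ[R] K) := (xx0 S K).symm.toEquiv.subsingleton
      have h4 : (LinearMap.ker f).liftQ φ hk ∘ₗ (f.quotKerEquivOfSurjective hf).symm.toLinearMap = 0 := 
        Subsingleton.elim (α := S →ₗ[R] K) _ _
      refine LinearMap.ext fun x => ?_
      have h5 := LinearMap.congr_fun h4 (f x)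
      have : (f.quotKerEquivOfSurjective hf).symm (f x) = Submodule.Quotient.mk x := by
        rw [LinearEquiv.symm_apply_eq]; rfl
      rw [LinearMap.comp_apply, LinearEquiv.coe_coe, this, Submodule.liftQ_apply] at h5
      exact h5
    have hB := (gkV a k (ModuleCat.of R (LinearMap.ker f)) _ r hM hr (fun hk ψ => s0 hk ψ) 
      (fun hk => s1 hk)).2
    obtain ⟨g, rfl⟩ := hf s
    obtain ⟨z, hz⟩ := hB (evalK R K G g)
    have : a • g = z.1 := by
      apply hG.2.1.1
      refine LinearMap.ext fun w => ?_
      rw [map_smul]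
      exact hz w
    rw [← map_smul, this]
    exact z.2
end GK


section GE
variable {R : Type u} [CommRing R]

/-- the properties of `E` with respect to `c` -/
def Good (c : Ideal R) (E : Type u) [AddCommGroup E] [Module R E] : Prop :=
  (∀ i, Subsingleton (XX R (R ⧸ c) E (i+1))) ∧ ∃ e : E, (∀ a, a ∈ c ↔ a • e = 0) ∧ 
    ∀ y : E, (∀ a ∈ c, a • y = 0) → ∃ r : R, y = r • e

variable [IsNoetherianRing R]

lemma gor_info {K : Type u} [AddCommGroup K] [Module R K] (hK : IsSemidualizing R K) (c : Ideal R)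
    (hc : IsGKGorensteinIdeal R K c) (n : ℕ) (g : gradeI R c = (n : ℕ∞)) :
    (∀ i < n, Subsingleton (XX R (R ⧸ c) K i)) ∧ (∀ i, n < i → Subsingleton (XX R (R ⧸ c) K i)) ∧
    (∀ a, (∀ x : XX R (R ⧸ c) K n, a • x = 0) → a ∈ c) ∧ 
    ∃ x : XX R (R ⧸ c) K n, ∀ y, ∃ r : R, y = r • x := by
  obtain ⟨m, hm1, hm2, x, hx⟩ := hc
  have hnm : m = n := by
    rw [grAnn, Ideal.annihilator_quotient] at hm1
    rw [gradeI, hm1] at g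
    exact_mod_cast g
  subst hnm
  have hlow : ∀ i < m, Subsingleton (XX R (R ⧸ c) K i) := by
    apply xx_K_of_R c K hK
    intro j hj
    obtain ⟨e⟩ := bridge (R := R) (R ⧸ c) R j
    by_contra hcon
    have h1 : ¬ Subsingleton (extM R j (R ⧸ c) R) := fun h => hcon e.symm.toEquiv.subsingleton
    have h2 : gradeI R c ≤ (j : ℕ∞) := sInf_le ⟨j, rfl, h1⟩
    rw [g] at h2
    have : m ≤ j := by exact_mod_cast h2
    omega
  have hgk : GKDimLE R K m (ModuleCat.of R (R ⧸ c)) := by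
    have hne : {n : ℕ∞ | ∃ k : ℕ, n = k ∧ GKDimLE R K k (ModuleCat.of R (R ⧸ c))}.Nonempty := by
      by_contra hcon
      rw [Set.not_nonempty_iff_eq_empty] at hcon
      rw [GKDim, hcon, sInf_empty] at hm2
      exact ENat.top_ne_coe m hm2
    obtain ⟨k, hk1, hk2⟩ := csInf_mem hne
    have : (m : ℕ∞) = k := by rw [← hm2]; exact hk1
    have : m = k := by exact_mod_cast this
    rw [this]; exact hk2
  refine ⟨hlow, gk_vanish m _ hgk, ?_, ?_⟩
  · intro a ha
    have := gk_ann a m (R ⧸ c) hgk hlow ha 1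
    have h2 : (Ideal.Quotient.mk c) a = 0 := by
      rw [← this, Algebra.smul_def, mul_one]; rfl
    exact Ideal.Quotient.eq_zero_iff_mem.mp h2
  · obtain ⟨e⟩ := bridge (R := R) (R ⧸ c) K m
    refine ⟨e x, fun y => ?_⟩
    have : e.symm y ∈ Submodule.span R {x} := by rw [hx]; trivial
    obtain ⟨r, hr⟩ := Submodule.mem_span_singleton.mp this
    refine ⟨r, ?_⟩
    rw [← map_smul, hr, LinearEquiv.apply_symm_apply]

lemma good_of {K : Type u} [AddCommGroup K] [Module R K] (hK : IsSemidualizing R K) (c : Ideal R)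
    (hc : IsGKGorensteinIdeal R K c) (n : ℕ) (g : gradeI R c = (n : ℕ∞)) (E : Type u) [AddCommGroup E]
    [Module R E] (hE : ∀ i, Nonempty (XX R (R ⧸ c) K (n+i) ≃ₗ[R] XX R (R ⧸ c) E i)) : Good c E := by
  obtain ⟨-, h2, h3, x, hx⟩ := gor_info hK c hc n g
  refine ⟨fun i => ?_, ?_⟩
  · obtain ⟨e⟩ := hE (i+1)
    have := h2 (n+(i+1)) (by omega)
    exact e.symm.toEquiv.subsingleton
  · obtain ⟨e⟩ := hE 0
    let ε : XX R (R ⧸ c) K n ≃ₗ[R] ((R ⧸ c) →ₗ[R] E) := e.trans (xx0 (R ⧸ c) E)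
    have hy : ∀ φ : (R ⧸ c) →ₗ[R] E, ∃ r : R, φ = r • ε x := by
      intro φ
      obtain ⟨r, hr⟩ := hx (ε.symm φ)
      exact ⟨r, by rw [← map_smul, ← hr, LinearEquiv.apply_symm_apply]⟩
    refine ⟨ε x 1, fun a => ⟨fun ha => ?_, fun ha => ?_⟩, fun y hyc => ?_⟩
    · rw [← map_smul, KB_quot c a ha, map_zero]
    · apply h3
      have h4 : a • x = 0 := by
        apply ε.injective
        rw [map_smul, map_zero]
        refine LinearMap.ext fun s => ?_
        obtain ⟨s, rfl⟩ := Ideal.Quotient.mk_surjective s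
        have : Ideal.Quotient.mk c s = s • (1 : R ⧸ c) := by rw [Algebra.smul_def, mul_one]; rfl
        rw [this, map_smul, LinearMap.smul_apply, ha, smul_zero, LinearMap.zero_apply]
      intro y
      obtain ⟨r, rfl⟩ := hx y
      rw [smul_comm, h4, smul_zero]
    · obtain ⟨r, hr⟩ := hy (ofElt c y hyc)
      refine ⟨r, ?_⟩
      rw [← ofElt_one c y hyc, hr, LinearMap.smul_apply]

theorem get_E {K : Type u} [AddCommGroup K] [Module R K] (hK : IsSemidualizing R K) (c₁ c₂ : Ideal R)
    (hc₁ : IsGKGorensteinIdeal R K c₁) (hc₂ : IsGKGorensteinIdeal R K c₂) (n : ℕ)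
    (g₁ : gradeI R c₁ = (n : ℕ∞)) (g₂ : gradeI R c₂ = (n : ℕ∞)) :
    ∃ E : ModuleCat.{u} R, (∀ (N : Type u) [AddCommGroup N] [Module R N], KB (c₁ * c₂) N → 
      ∀ i, Nonempty (XX R N K (n+i) ≃ₗ[R] XX R N E i)) ∧ Good c₁ E ∧ Good c₂ E := by
  obtain ⟨E, hE⟩ := exists_E c₁ c₂ n K (gor_info hK c₁ hc₁ n g₁).1 (gor_info hK c₂ hc₂ n g₂).1
  refine ⟨E, hE, good_of hK c₁ hc₁ n g₁ E ?_, good_of hK c₂ hc₂ n g₂ E ?_⟩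
  · exact hE _ ((KB_quot c₁).mono Ideal.mul_le_left)
  · exact hE _ ((KB_quot c₂).mono Ideal.mul_le_right)
end GE


section LK
variable {R : Type u} [CommRing R]

lemma xpre_sum {A B K : Type u} [AddCommGroup A] [Module R A] [AddCommGroup B] [Module R B]
    [AddCommGroup K] [Module R K] {n : ℕ} (f : Fin n → (A →ₗ[R] B)) (i : ℕ) (x : XX R B K i) :
    xpre (∑ j, f j) K i x = ∑ j, xpre (f j) K i x := by
  let F : (A →ₗ[R] B) →+ XX R A K i := AddMonoidHom.mk' (fun f => xpre f K i x) (fun f g => xpre_add f g i x)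
  exact map_sum F f _

lemma xx_sub_pow {A K : Type u} [AddCommGroup A] [Module R A] 
    [AddCommGroup K] [Module R K] (n i : ℕ) (h : Subsingleton (XX R A K i)) : 
    Subsingleton (XX R (Fin n → A) K i) := by
  have : ∀ x : XX R (Fin n → A) K i, x = 0 := by
    intro x
    have h1 : (LinearMap.id : (Fin n → A) →ₗ[R] (Fin n → A)) = 
        ∑ j, (LinearMap.single R (fun _ : Fin n => A) j) ∘ₗ LinearMap.proj j := by
      refine LinearMap.ext fun v => ?_
      rw [LinearMap.sum_apply]
      exact (Finset.univ_sum_single v).symm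
    rw [← xpre_id i x, h1, xpre_sum]
    refine Finset.sum_eq_zero fun j _ => ?_
    rw [xpre_comp, Subsingleton.elim (xpre _ K i x) 0, map_zero]
  exact ⟨fun a b => (this a).trans (this b).symm⟩

lemma xx_sub_fgproj (c : Ideal R) {K F : Type u} [AddCommGroup K] [Module R K] [AddCommGroup F] [Module R F]
    [Module (R ⧸ c) F] [IsScalarTower R (R ⧸ c) F] [Module.Finite (R ⧸ c) F] [Module.Projective (R ⧸ c) F]
    (i : ℕ) (h : Subsingleton (XX R (R ⧸ c) K i)) : Subsingleton (XX R F K i) := by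
  obtain ⟨n, f, hf⟩ := Module.Finite.exists_fin' (R ⧸ c) F
  obtain ⟨g, hg⟩ := Module.projective_lifting_property f LinearMap.id hf
  have := xx_sub_pow n i h
  have : ∀ x : XX R F K i, x = 0 := by
    intro x
    rw [← one_smul R x]
    exact kills_of_factor 1 (g.restrictScalars R) (f.restrictScalars R) 
      (fun x => by rw [one_smul]; exact LinearMap.congr_fun hg x) i x
  exact ⟨fun a b => (this a).trans (this b).symm⟩

variable {c : Ideal R} {E : Type u} [AddCommGroup E] [Module R E]

lemma tower_KB {X : Type u} [AddCommGroup X] [Module R X]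
    [Module (R ⧸ c) X] [IsScalarTower R (R ⧸ c) X] : KB c X := by
  intro a ha x
  rw [← one_smul (R ⧸ c) x, ← smul_assoc, KB_quot c a ha, zero_smul]

lemma mk_smul' {X : Type u} [AddCommGroup X] [Module R X]
    [Module (R ⧸ c) X] [IsScalarTower R (R ⧸ c) X] (r : R) (x : X) : 
    (Ideal.Quotient.mk c r) • x = r • x := by
  exact algebraMap_smul (R ⧸ c) r x

/-- Hom_R(X,E) and Dual over the quotient -/
lemma exists_sigma (e : E) (he : ∀ a, a ∈ c ↔ a • e = 0)
    (hy : ∀ y : E, (∀ a ∈ c, a • y = 0) → ∃ r : R, y = r • e) :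
    ∃ τ : (R ⧸ c) →ₗ[R] E, Function.Injective τ ∧ ∀ (X : Type u) [AddCommGroup X] [Module R X]
      [Module (R ⧸ c) X] [IsScalarTower R (R ⧸ c) X], 
      ∀ g : X →ₗ[R] E, ∃ g' : X →ₗ[R ⧸ c] (R ⧸ c), ∀ x, τ (g' x) = g x := by
  let τ : (R ⧸ c) →ₗ[R] E := ofElt c e (fun a ha => (he a).mp ha)
  have hτ : Function.Injective τ := by
    rw [injective_iff_map_eq_zero]
    intro r hr
    obtain ⟨r, rfl⟩ := Ideal.Quotient.mk_surjective r
    have : r • e = 0 := hr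
    exact Ideal.Quotient.eq_zero_iff_mem.mpr ((he r).mpr this)
  refine ⟨τ, hτ, ?_⟩
  intro X _ _ _ _ g
  have h1 : ∀ x : X, ∃ s : R ⧸ c, τ s = g x := by
    intro x
    obtain ⟨r, hr⟩ := hy (g x) (fun a ha => by rw [← map_smul, tower_KB (c := c) a ha, map_zero])
    refine ⟨r • 1, ?_⟩
    rw [map_smul, hr]
    congr 1
    exact ofElt_one c e _
  choose g' hg' using h1
  refine ⟨{ toFun := g', map_add' := ?_, map_smul' := ?_ }, hg'⟩
  · intro x y
    apply hτ
    rw [map_add, hg', hg', hg', map_add]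
  · intro s x
    obtain ⟨r, rfl⟩ := Ideal.Quotient.mk_surjective s
    apply hτ
    rw [hg', RingHom.id_apply, mk_smul', mk_smul', map_smul, map_smul, hg']

theorem link_seq (hE : Good c E) (M N P : Type u) [AddCommGroup M] [Module R M] [Module (R ⧸ c) M]
    [IsScalarTower R (R ⧸ c) M] [AddCommGroup N] [Module R N] [Module (R ⧸ c) N]
    [IsScalarTower R (R ⧸ c) N] [AddCommGroup P] [Module (R ⧸ c) P] [Module.Finite (R ⧸ c) P]
    [Module.Projective (R ⧸ c) P] (ε : P →ₗ[R ⧸ c] M) (hε : Function.Surjective ε) 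
    (q : Module.Dual (R ⧸ c) P →ₗ[R ⧸ c] N) (hq : Function.Surjective q) 
    (hq' : ∀ f, q f = 0 ↔ ∀ p, ε p = 0 → f p = 0) :
    ∃ (F : ModuleCat.{u} R) (ι : (M →ₗ[R] E) →ₗ[R] F) (π : F →ₗ[R] N),
      Function.Injective ι ∧ Function.Surjective π ∧ Function.Exact ι π ∧ 
      (∀ i, Subsingleton (XX R F E (i+1))) ∧ 
      ∀ φ : (M →ₗ[R] E) →ₗ[R] E, (∃ ψ : F →ₗ[R] E, ψ ∘ₗ ι = φ) ↔ ∃ m : M, ∀ h, φ h = h m := by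
  obtain ⟨hX, e, he, hy⟩ := hE
  obtain ⟨τ, hτ, hσ⟩ := exists_sigma e he hy
  have hs := hσ
  choose σ hσ using hσ M
  let ι : (M →ₗ[R] E) →ₗ[R] Module.Dual (R ⧸ c) P := 
    { toFun := fun h => σ h ∘ₗ ε
      map_add' := fun h h' => LinearMap.ext fun p => hτ (by simp [hσ])
      map_smul' := fun r h => LinearMap.ext fun p => hτ (by simp [hσ]) }
  have hι : ∀ h p, τ (ι h p) = h (ε p) := fun h p => hσ h (ε p)
  let π : Module.Dual (R ⧸ c) P →ₗ[R] N := q.restrictScalars R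
  refine ⟨ModuleCat.of R (Module.Dual (R ⧸ c) P), ι, π, ?_, hq, ?_, ?_, ?_⟩
  · rw [injective_iff_map_eq_zero]
    intro h h0
    refine LinearMap.ext fun m => ?_
    obtain ⟨p, rfl⟩ := hε m
    rw [← hι, h0]; simp
  · intro f
    change q f = 0 ↔ _
    rw [hq']
    constructor
    · intro hf
      have hk : LinearMap.ker ε ≤ LinearMap.ker f := fun p hp => hf p hp
      let f' : M →ₗ[R ⧸ c] (R ⧸ c) := (LinearMap.ker ε).liftQ f hk ∘ₗ (ε.quotKerEquivOfSurjective hε).symm.toLinearMap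
      have hf' : ∀ p, f' (ε p) = f p := by
        intro p
        have : (ε.quotKerEquivOfSurjective hε).symm (ε p) = Submodule.Quotient.mk p := by
          rw [LinearEquiv.symm_apply_eq]; rfl
        change (LinearMap.ker ε).liftQ f hk ((ε.quotKerEquivOfSurjective hε).symm (ε p)) = f p
        rw [this, Submodule.liftQ_apply]
      refine ⟨τ ∘ₗ f'.restrictScalars R, LinearMap.ext fun p => hτ ?_⟩
      rw [hι, ← hf']; rfl
    · rintro ⟨h, rfl⟩ p hp
      apply hτ
      rw [hι, hp, map_zero, map_zero]
  · intro i
    exact xx_sub_fgproj c (F := Module.Dual (R ⧸ c) P) (i+1) (hX i)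
  · intro φ
    constructor
    · rintro ⟨ψ, rfl⟩
      obtain ⟨ψ', hψ'⟩ := hs (Module.Dual (R ⧸ c) P) ψ
      obtain ⟨p, hp⟩ := (Module.bijective_dual_eval (R ⧸ c) P).2 ψ'
      refine ⟨ε p, fun h => ?_⟩
      rw [← hι, LinearMap.comp_apply]
      refine (hψ' (ι h)).symm.trans ?_
      rw [← hp]; rfl
    · rintro ⟨m, hm⟩
      obtain ⟨p, rfl⟩ := hε m
      let ψ : Module.Dual (R ⧸ c) P →ₗ[R] E := 
        τ ∘ₗ (Module.Dual.eval (R ⧸ c) P p).restrictScalars R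
      refine ⟨ψ, LinearMap.ext fun h => ?_⟩
      rw [hm, ← hι]; rfl
end LK


section FIN
variable {R : Type u} [CommRing R]

/-- The output of `link_seq` -/
def LS (M N E : Type u) [AddCommGroup M] [Module R M] [AddCommGroup N] [Module R N]
    [AddCommGroup E] [Module R E] : Prop :=
  ∃ (F : ModuleCat.{u} R) (ι : (M →ₗ[R] E) →ₗ[R] F) (π : F →ₗ[R] N), Function.Injective ι ∧
    Function.Surjective π ∧ Function.Exact ι π ∧ (∀ i, Subsingleton (XX R F E (i+1))) ∧
    ∀ φ : (M →ₗ[R] E) →ₗ[R] E, (∃ ψ : F →ₗ[R] E, ψ ∘ₗ ι = φ) ↔ ∃ m : M, ∀ h, φ h = h m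

lemma LS_of_res {c : Ideal R} {E : Type u} [AddCommGroup E] [Module R E] (hE : Good c E)
    (M N : Type u) [AddCommGroup M] [Module R M] [AddCommGroup N] [Module R N]
    [Module (R ⧸ c) M] [IsScalarTower R (R ⧸ c) M] [Module (R ⧸ c) N] [IsScalarTower R (R ⧸ c) N]
    (F : MinRes (R ⧸ c) M) (e : F.lambdaMod ≃ₗ[R ⧸ c] N) : LS (R := R) M N E := by
  letI : Module R (F.P 0) := Module.compHom _ (algebraMap R (R ⧸ c))
  haveI : IsScalarTower R (R ⧸ c) (F.P 0) := by
    refine ⟨fun r s x => ?_⟩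
    rw [Algebra.smul_def, mul_smul]; rfl
  haveI := F.projective 0
  haveI := F.finite 0
  let e' : ↥(LinearMap.range (F.d 0).dualMap) ≃ₗ[R ⧸ c] N := e
  refine link_seq hE M N (F.P 0) F.ε F.surj (e'.toLinearMap ∘ₗ (F.d 0).dualMap.rangeRestrict) ?_ ?_
  · exact e'.surjective.comp (LinearMap.surjective_rangeRestrict _)
  · intro f
    have h0 : (e'.toLinearMap ∘ₗ (F.d 0).dualMap.rangeRestrict) f = 0 ↔ (F.d 0).dualMap f = 0 := by
      rw [LinearMap.comp_apply, LinearEquiv.coe_coe, LinearEquiv.map_eq_zero_iff, ← Subtype.coe_inj]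
      rfl
    rw [h0]
    constructor
    · intro h p hp
      have : p ∈ LinearMap.range (F.d 0) := by rw [F.exact0]; exact hp
      obtain ⟨q, rfl⟩ := this
      exact LinearMap.congr_fun h q
    · intro h
      refine LinearMap.ext fun q => h _ ?_
      have : F.d 0 q ∈ LinearMap.ker F.ε := by rw [← F.exact0]; exact ⟨q, rfl⟩
      exact this

lemma LS_left {c : Ideal R} {E : Type u} [AddCommGroup E] [Module R E] (hE : Good c E)
    (M N : Type u) [AddCommGroup M] [Module R M] [AddCommGroup N] [Module R N]
    (l : LinkedBy R c M N) : LS (R := R) M N E ∧ LS (R := R) N M E ∧ KB c M ∧ KB c N := by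
  obtain ⟨hM, hN, l⟩ := l
  letI := hM.module
  letI := hN.module
  haveI : IsScalarTower R (R ⧸ c) M := hM.isScalarTower
  haveI : IsScalarTower R (R ⧸ c) N := hN.isScalarTower
  obtain ⟨F, G, ⟨e⟩, ⟨e'⟩⟩ := l
  exact ⟨LS_of_res hE M N F e, LS_of_res hE N M G e', fun a ha x => @hM x ⟨a, ha⟩, fun a ha x => @hN x ⟨a, ha⟩⟩

lemma LS_hi {M N E : Type u} [AddCommGroup M] [Module R M] [AddCommGroup N] [Module R N]
    [AddCommGroup E] [Module R E] (h : LS (R := R) M N E) (k : ℕ) :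
    Nonempty (XX R (M →ₗ[R] E) E (k+1) ≃ₗ[R] XX R N E (k+1+1)) := by
  obtain ⟨F, ι, π, h1, h2, h3, h4, -⟩ := h
  haveI := h4 k
  haveI := h4 (k+1)
  exact ⟨xdelE ι π h1 h2 h3 (k+1)⟩

/-- functionals given by evaluation -/
def evSub (M E : Type u) [AddCommGroup M] [Module R M] [AddCommGroup E] [Module R E] :
    Submodule R ((M →ₗ[R] E) →ₗ[R] E) := LinearMap.range (LinearMap.applyₗ (R := R) (M := M) (M₂ := E))

lemma LS_lo {M N E : Type u} [AddCommGroup M] [Module R M] [AddCommGroup N] [Module R N]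
    [AddCommGroup E] [Module R E] (h : LS (R := R) M N E) :
    Nonempty ((((M →ₗ[R] E) →ₗ[R] E) ⧸ evSub (R := R) M E) ≃ₗ[R] XX R N E 1) := by
  obtain ⟨F, ι, π, h1, h2, h3, h4, h5⟩ := h
  haveI : Subsingleton (XX R F E 1) := h4 0
  have hk : evSub (R := R) M E = LinearMap.ker (xdel0 ι π h1 h2 h3 E) := by
    ext φ
    rw [LinearMap.mem_ker, xdel0_eq_zero, h5]
    constructor
    · rintro ⟨m, rfl⟩; exact ⟨m, fun _ => rfl⟩
    · rintro ⟨m, hm⟩; exact ⟨m, LinearMap.ext fun h => (hm h).symm⟩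
  exact ⟨(Submodule.quotEquivOfEq _ _ hk).trans
    (LinearMap.quotKerEquivOfSurjective _ (xdel0_surj ι π h1 h2 h3))⟩

end FIN


end AuxMaterial

section Statements

variable (R : Type u) [CommRing R] [IsNoetherianRing R]

theorem stmt18 [IsLocalRing R] (K : Type u) [AddCommGroup K] [Module R K]
    (hK : IsSemidualizing R K)
    (c₁ c₂ : Ideal R) (hc₁ : IsGKGorensteinIdeal R K c₁) (hc₂ : IsGKGorensteinIdeal R K c₂)
    (M₁ M M₂ : Type u) [AddCommGroup M₁] [Module R M₁] [Module.Finite R M₁]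
    [AddCommGroup M] [Module R M] [Module.Finite R M]
    [AddCommGroup M₂] [Module R M₂] [Module.Finite R M₂]
    (l₁ : LinkedBy R c₁ M₁ M) (l₂ : LinkedBy R c₂ M M₂)
    (n : ℕ) (g₁ : gradeI R c₁ = (n : ℕ∞)) (g₂ : gradeI R c₂ = (n : ℕ∞)) :
    ∀ i : ℕ, n < i → Nonempty (extM R i M₁ K ≃ₗ[R] extM R i M₂ K) := by
  intro i hi
  obtain ⟨E, hE, G1, G2⟩ := get_E hK c₁ c₂ hc₁ hc₂ n g₁ g₂
  obtain ⟨-, s1, k1, -⟩ := LS_left G1 M₁ M l₁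
  obtain ⟨s2, -, -, k2⟩ := LS_left G2 M M₂ l₂
  obtain ⟨k, rfl⟩ : ∃ k, i = n + (k + 1) := ⟨i - n - 1, by omega⟩
  obtain ⟨a1⟩ := hE M₁ (k1.mono Ideal.mul_le_left) (k+1)
  obtain ⟨a2⟩ := hE M₂ (k2.mono Ideal.mul_le_right) (k+1)
  obtain ⟨b1⟩ := bridge (R := R) M₁ K (n+(k+1))
  obtain ⟨b2⟩ := bridge (R := R) M₂ K (n+(k+1))
  have mid : Nonempty (XX R M₁ E (k+1) ≃ₗ[R] XX R M₂ E (k+1)) := by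
    cases k with
    | zero =>
      obtain ⟨x1⟩ := LS_lo s1
      obtain ⟨x2⟩ := LS_lo s2
      exact ⟨x1.symm.trans x2⟩
    | succ k =>
      obtain ⟨x1⟩ := LS_hi s1 k
      obtain ⟨x2⟩ := LS_hi s2 k
      exact ⟨x1.symm.trans x2⟩
  obtain ⟨m⟩ := mid
  exact ⟨b1.trans (a1.trans (m.trans (a2.symm.trans b2.symm)))⟩

end Statements
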